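/- Let Ω be a domain (nonempty open connected set) in ℝⁿ (n ≥ 2) whose boundary ∂Ω is a d-set with n−1 < d < n, let 1 < p < ∞, 1 ≤ q < ∞ and s > (n−d)/p. Then there is a constant c (depending on p, q, s, n, d and ∂Ω) such that for every f ∈ F^s_{pq}(ℝⁿ) whose trace satisfies Tr_{∂Ω} f = 0 ℋᵈ-almost everywhere on ∂Ω, one has ‖f·χ_Ω‖_{F^s_{pq}(ℝⁿ)} ≤ c ‖f‖_{F^s_{pq}(ℝⁿ)}. -/

import Mathlib

/-!
Let `δ` be the distance to `∂Ω`. At scales `t < δ x` the cube `Q(x, t)` lies on one side of `∂Ω`, so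
truncation by `Ω` does not increase the local best approximation, and at scales `t ≥ 1/384` that
approximation is at most a multiple of the mean of `|f|` over `Q(x, 1)`. In the remaining range the
mean of `|f|` over `Q(x, t)` has to be controlled by the smoothness of `f`, through the vanishing
trace.

* A nonzero polynomial cannot vanish `ℋᵈ`-almost everywhere on `∂Ω`, because its zero set is
  `ℋᵈ`-null for `d > n - 1`. By compactness, the coefficients of a polynomial of degree at most `N`
  are controlled by its `L¹` mean on `∂Ω ∩ Q(w, r)`, uniformly in `w ∈ ∂Ω` and, after blow-up, in
  `r ≤ 1`.
* Lagrange extrapolation of the means of `f` over concentric cubes reproduces polynomials and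
  converges to the trace. Where the trace is zero, a polynomial close to `f` at scale `r` is
  therefore bounded by the telescoping sum of the best approximations of `f` at the scales
  `r 2⁻ʲ`. Together these give a Hardy-type bound for the mean of `|f|` over `Q(x, t)` by
  `t ^ (s - σ - n) ∫_{Q(x, 3t)} f^♯ δ ^ σ`, with `f^♯` the sharp maximal function of smoothness `s`
  and any `σ < s - n + d`.
* Hölder's inequality, with powers of `δ` that are integrable near a `d`-set, moves the exponent `p`
  inside the integral. The `L^p` estimate in `x` is then Tonelli's theorem for a potential with
  singularity `max (δ x) |x - y|`. The condition `s > (n - d) / p` is what makes an admissible `σ`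
  exist.
-/

open MeasureTheory Metric Set Filter
open scoped ENNReal NNReal Topology

noncomputable section

/-- ℝⁿ, with the sup-norm (given by the product metric on `Fin n → ℝ`). -/
abbrev Rn (n : ℕ) := Fin n → ℝ

/-- `S` is an (Ahlfors) `d`-set with regularity constant `C`. -/
def IsDSet {n : ℕ} (S : Set (Rn n)) (d C : ℝ) : Prop :=
  IsClosed S ∧ 1 < C ∧ ∀ w ∈ S, ∀ r : ℝ, 0 < r → r ≤ 1 →
    ENNReal.ofReal (C⁻¹ * r ^ d) ≤ μH[d] (closedBall w r ∩ S) ∧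
      μH[d] (closedBall w r ∩ S) ≤ ENNReal.ofReal (C * r ^ d)

/-- `Tr_S f = 0` pointwise ℋᵈ-almost everywhere on `S`. -/
def TraceZero {n : ℕ} (S : Set (Rn n)) (d : ℝ) (f : Rn n → ℝ) : Prop :=
  ∀ᵐ x ∂(μH[d]).restrict S,
    Tendsto (fun r : ℝ => ⨍ y in closedBall x r, f y) (𝓝[>] 0) (𝓝 0)

/-- The normalized local best approximation `ℰ_k(f, Q(x,r))_{L^u}`. -/
def localApprox {n : ℕ} (k : ℕ) (u : ℝ) (f : Rn n → ℝ) (x : Rn n) (r : ℝ) : ℝ≥0∞ :=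
  ⨅ (P : MvPolynomial (Fin n) ℝ) (_ : P.totalDegree ≤ k - 1),
    ((volume (closedBall x r))⁻¹ *
      ∫⁻ y in closedBall x r, ENNReal.ofReal |f y - MvPolynomial.eval y P| ^ u) ^ (1 / u)

/-- The Triebel–Lizorkin norm `‖f‖_{F^s_{pq}}` (with `k = [s]+1`). -/
def tlNorm {n : ℕ} (s p q : ℝ) (f : Rn n → ℝ) : ℝ≥0∞ :=
  (∫⁻ x, ENNReal.ofReal |f x| ^ p) ^ (1 / p) +
  (∫⁻ x, ((∫⁻ t in Set.Ioo (0:ℝ) 1,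
      (ENNReal.ofReal (t ^ (-s)) * localApprox (⌊s⌋₊ + 1) 1 f x t) ^ q
        * ENNReal.ofReal t⁻¹) ^ (1 / q)) ^ p) ^ (1 / p)

/-- The power `t ^ a` of a positive real number, as an extended nonnegative real: integrals of
powers are computed in `ℝ≥0∞`, where no integrability has to be carried around. -/
def erpow (t a : ℝ) : ℝ≥0∞ := ENNReal.ofReal (t ^ a)

section Power

variable {t u a b c : ℝ}

lemma erpow_zero (t : ℝ) : erpow t 0 = 1 := by simp [erpow]

lemma erpow_one (t : ℝ) : erpow t 1 = ENNReal.ofReal t := by simp [erpow]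

lemma erpow_ne_top (t a : ℝ) : erpow t a ≠ ⊤ := ENNReal.ofReal_ne_top

lemma erpow_ne_zero (ht : 0 < t) (a : ℝ) : erpow t a ≠ 0 :=
  (ENNReal.ofReal_pos.2 (Real.rpow_pos_of_pos ht a)).ne'

lemma erpow_add (ht : 0 < t) (a b : ℝ) : erpow t (a + b) = erpow t a * erpow t b := by
  rw [erpow, Real.rpow_add ht, ENNReal.ofReal_mul (by positivity), erpow, erpow]

lemma erpow_neg_mul_self (ht : 0 < t) (a : ℝ) : erpow t (-a) * erpow t a = 1 := by
  rw [← erpow_add ht, neg_add_cancel, erpow_zero]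

lemma erpow_rpow (ht : 0 < t) (a b : ℝ) : erpow t a ^ b = erpow t (a * b) := by
  rw [erpow, ENNReal.ofReal_rpow_of_pos (by positivity), ← Real.rpow_mul ht.le, erpow]

lemma mul_erpow (ht : 0 ≤ t) (hu : 0 ≤ u) (a : ℝ) : erpow (t * u) a = erpow t a * erpow u a := by
  rw [erpow, Real.mul_rpow ht hu, ENNReal.ofReal_mul (by positivity), erpow, erpow]

lemma erpow_le_erpow (ht : 0 ≤ t) (htu : t ≤ u) (ha : 0 ≤ a) : erpow t a ≤ erpow u a :=
  ENNReal.ofReal_le_ofReal (Real.rpow_le_rpow ht htu ha)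

lemma erpow_le_erpow_of_nonpos (ht : 0 < t) (htu : t ≤ u) (ha : a ≤ 0) : erpow u a ≤ erpow t a :=
  ENNReal.ofReal_le_ofReal (Real.rpow_le_rpow_of_nonpos ht htu ha)

@[fun_prop]
lemma measurable_erpow (a : ℝ) : Measurable fun t : ℝ => erpow t a :=
  (measurable_id.pow_const a).ennreal_ofReal

lemma exists_erpow_le_of_comparable (a : ℝ) {c M : ℝ} (hc : 0 < c) (hM : 0 < M) :
    ∃ K : ℝ≥0, ∀ r u : ℝ, 0 < r → c * r ≤ u → u ≤ M * r → erpow r a ≤ K * erpow u a := by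
  refine ⟨((1 / c) ^ a + (1 / M) ^ a).toNNReal, fun r u hr hcu huM => ?_⟩
  have hu : 0 < u := (mul_pos hc hr).trans_le hcu
  have hratio : 0 < r / u := div_pos hr hu
  have hupper : r / u ≤ 1 / c := by rw [div_le_div_iff₀ hu hc]; linarith
  have hlower : 1 / M ≤ r / u := by rw [div_le_div_iff₀ hM hu]; linarith
  have hpow : (r / u) ^ a ≤ (1 / c) ^ a + (1 / M) ^ a := by
    rcases le_total 0 a with ha | ha
    · exact (Real.rpow_le_rpow hratio.le hupper ha).trans (le_add_of_nonneg_right (by positivity))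
    · exact (Real.rpow_le_rpow_of_nonpos (by positivity) hlower ha).trans
        (le_add_of_nonneg_left (by positivity))
  calc erpow r a = erpow (r / u) a * erpow u a := by
        rw [← mul_erpow hratio.le hu.le, div_mul_cancel₀ _ hu.ne']
    _ ≤ _ := by gcongr; exact ENNReal.ofReal_le_ofReal hpow

lemma lintegral_Ioi_erpow_le (hb : 0 < b) (hc : 0 < c) :
    ∫⁻ t in Ioi c, erpow t (-b - 1) ≤ (b⁻¹.toNNReal : ℝ≥0∞) * erpow c (-b) := by
  have hnonneg : ∀ᵐ t ∂volume.restrict (Ioi c), 0 ≤ t ^ (-b - 1) := by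
    filter_upwards [self_mem_ae_restrict measurableSet_Ioi] with t ht
    exact Real.rpow_nonneg (hc.trans ht).le _
  simp only [erpow]
  rw [← ofReal_integral_eq_lintegral_ofReal (integrableOn_Ioi_rpow_of_lt (by linarith) hc) hnonneg,
    integral_Ioi_rpow_of_lt (by linarith) hc, ← ENNReal.ofReal,
    ← ENNReal.ofReal_mul (by positivity), sub_add_cancel, neg_div_neg_eq, div_eq_inv_mul]

lemma lintegral_Ioc_erpow_le (ha : 0 < a) (hc : 0 < c) :
    ∫⁻ t in Ioc 0 c, erpow t (a - 1) ≤ (a⁻¹.toNNReal : ℝ≥0∞) * erpow c a := by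
  have hnonneg : ∀ᵐ t ∂volume.restrict (Ioc 0 c), 0 ≤ t ^ (a - 1) := by
    filter_upwards [self_mem_ae_restrict measurableSet_Ioc] with t ht
    exact Real.rpow_nonneg ht.1.le _
  have hinteg : IntervalIntegrable (fun t : ℝ => t ^ (a - 1)) volume 0 c :=
    intervalIntegral.intervalIntegrable_rpow' (by linarith)
  simp only [erpow]
  rw [← ofReal_integral_eq_lintegral_ofReal
      ((intervalIntegrable_iff_integrableOn_Ioc_of_le hc.le).1 hinteg) hnonneg,
    ← intervalIntegral.integral_of_le hc.le, integral_rpow (Or.inl (by linarith)),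
    ← ENNReal.ofReal, ← ENNReal.ofReal_mul (by positivity), sub_add_cancel,
    Real.zero_rpow ha.ne', sub_zero, div_eq_inv_mul]

lemma exists_erpow_le_lintegral_Ioo (a : ℝ) :
    ∃ K : ℝ≥0, ∀ c : ℝ, 0 < c → erpow c a ≤ K * ∫⁻ t in Ioo c (2 * c), erpow t (a - 1) := by
  obtain ⟨K, hK⟩ := exists_erpow_le_of_comparable (a - 1) one_pos two_pos
  refine ⟨K, fun c hc => ?_⟩
  calc erpow c a = ∫⁻ _ in Ioo c (2 * c), erpow c (a - 1) := by
        rw [setLIntegral_const, Real.volume_Ioo, two_mul, add_sub_cancel_right, ← erpow_one c,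
          ← erpow_add hc, sub_add_cancel]
    _ ≤ ∫⁻ t in Ioo c (2 * c), K * erpow t (a - 1) :=
        setLIntegral_mono ((measurable_erpow _).const_mul _) fun t ht =>
          hK c t hc (by linarith [ht.1]) ht.2.le
    _ = _ := lintegral_const_mul _ (measurable_erpow _)

lemma volume_closedBall_eq_erpow {n : ℕ} (x : Rn n) {r : ℝ} (hr : 0 < r) :
    volume (closedBall x r) = 2 ^ n * erpow r n := by
  rw [Real.volume_pi_closedBall x hr.le, mul_pow, ENNReal.ofReal_mul (by positivity),
    Fintype.card_fin, erpow, Real.rpow_natCast, ENNReal.ofReal_pow zero_le_two,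
    ENNReal.ofReal_ofNat]

end Power

section ZeroSets

lemma exists_nhds_hausdorffMeasure_level_eq_zero {E F : Type*}
    [NormedAddCommGroup E] [NormedSpace ℝ E] [FiniteDimensional ℝ E] [MeasurableSpace E]
    [BorelSpace E] [NormedAddCommGroup F] [NormedSpace ℝ F] [FiniteDimensional ℝ F]
    {f : E → F} {f' : E →L[ℝ] F} {a : E} {d : ℝ} (hf : HasStrictFDerivAt f f' a)
    (hf' : f'.range = ⊤) (hd0 : 0 ≤ d) (hd : (Module.finrank ℝ E : ℝ) < d + Module.finrank ℝ F) :
    ∃ U ∈ 𝓝 a, μH[d] (U ∩ f ⁻¹' {f a}) = 0 := by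
  have : CompleteSpace E := FiniteDimensional.complete ℝ E
  have : CompleteSpace F := FiniteDimensional.complete ℝ F
  let φ : f'.ker → E := hf.implicitFunction f f' hf' (f a)
  let π : E → f'.ker := fun x => (hf.implicitToOpenPartialHomeomorph f f' hf' x).2
  obtain ⟨K, V, hV, hφ⟩ := (hf.to_implicitFunction hf').exists_lipschitzOnWith
  have hπ : Tendsto π (𝓝 a) (𝓝 0) := by
    have hcont := (hf.implicitToOpenPartialHomeomorph f f' hf').continuousAt
      (hf.mem_implicitToOpenPartialHomeomorph_source hf')
    have := (continuous_snd.tendsto _).comp hcont.tendsto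
    rwa [hf.implicitToOpenPartialHomeomorph_self hf'] at this
  refine ⟨π ⁻¹' V ∩ {x | hf.implicitFunction f f' hf' (f x) (π x) = x},
    inter_mem (hπ hV) (hf.eq_implicitFunction hf'), ?_⟩
  have hsub : π ⁻¹' V ∩ {x | hf.implicitFunction f f' hf' (f x) (π x) = x} ∩ f ⁻¹' {f a}
      ⊆ φ '' V := by
    rintro x ⟨⟨hxV, hx : hf.implicitFunction f f' hf' (f x) (π x) = x⟩, hxa : f x = f a⟩
    exact ⟨π x, hxV, by rwa [hxa] at hx⟩
  have hker : μH[d] (univ : Set f'.ker) = 0 := by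
    have hrank : (Module.finrank ℝ f'.ker : ℝ≥0) < d.toNNReal := by
      have hsum := f'.toLinearMap.finrank_range_add_finrank_ker
      have hrange : Module.finrank ℝ f'.range = Module.finrank ℝ F := by rw [hf', finrank_top]
      rw [Real.lt_toNNReal_iff_coe_lt, NNReal.coe_natCast]
      have : (Module.finrank ℝ F : ℝ) + Module.finrank ℝ f'.ker = Module.finrank ℝ E := by
        rw [← hrange]; exact_mod_cast hsum
      linarith
    have hdim : dimH (univ : Set f'.ker) < d.toNNReal := by
      rw [Real.dimH_univ_eq_finrank]; exact_mod_cast hrank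
    simpa only [Real.coe_toNNReal d hd0] using hausdorffMeasure_of_dimH_lt hdim
  refine measure_mono_null hsub (le_antisymm ?_ bot_le)
  calc μH[d] (φ '' V) ≤ (K : ℝ≥0∞) ^ d * μH[d] V := hφ.hausdorffMeasure_image_le hd0
    _ = 0 := by rw [measure_mono_null (subset_univ V) hker, mul_zero]

variable {n : ℕ}

lemma hasStrictFDerivAt_eval (P : MvPolynomial (Fin n) ℝ) (z : Rn n) :
    HasStrictFDerivAt (fun y : Rn n => MvPolynomial.eval y P)
      (∑ i, MvPolynomial.eval z (MvPolynomial.pderiv i P) •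
        (ContinuousLinearMap.proj i : Rn n →L[ℝ] ℝ)) z := by
  induction P using MvPolynomial.induction_on with
  | C a => simpa using hasStrictFDerivAt_const a z
  | add P Q hP hQ =>
    simp only [map_add, add_smul, Finset.sum_add_distrib]
    exact hP.add hQ
  | mul_X P j hP =>
    have hj : HasStrictFDerivAt (fun y : Rn n => y j)
        (ContinuousLinearMap.proj j : Rn n →L[ℝ] ℝ) z :=
      (ContinuousLinearMap.proj j : Rn n →L[ℝ] ℝ).hasStrictFDerivAt
    simp only [map_mul, MvPolynomial.eval_X]
    refine (hP.mul hj).congr_fderiv ?_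
    ext v
    simp [MvPolynomial.pderiv_X, Pi.single_apply, Finset.mul_sum, add_mul, Finset.sum_add_distrib,
      mul_assoc, apply_ite]

lemma totalDegree_pderiv_lt {σ R : Type*} [CommSemiring R] {P : MvPolynomial σ R} {i : σ}
    (h : MvPolynomial.pderiv i P ≠ 0) :
    (MvPolynomial.pderiv i P).totalDegree < P.totalDegree := by
  have hdegree : ∀ m ∈ (MvPolynomial.pderiv i P).support,
      (m.sum fun _ e => e) < P.totalDegree := by
    intro m hm
    rw [MvPolynomial.mem_support_iff, MvPolynomial.coeff_pderiv] at hm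
    have hle := MvPolynomial.le_totalDegree
      (MvPolynomial.mem_support_iff.2 (left_ne_zero_of_mul hm))
    rw [Finsupp.sum_add_index' (by simp) (by simp), Finsupp.sum_single_index rfl] at hle
    exact Nat.lt_of_succ_le hle
  obtain ⟨m, hm⟩ := MvPolynomial.support_nonempty.2 h
  exact (Finset.sup_lt_iff (Nat.zero_lt_of_lt (hdegree m hm))).2 hdegree

lemma eq_C_of_forall_pderiv_eq_zero {σ R : Type*} [CommRing R] [IsDomain R] [CharZero R]
    {P : MvPolynomial σ R} (h : ∀ i, MvPolynomial.pderiv i P = 0) :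
    P = MvPolynomial.C (P.coeff 0) := by
  classical
  ext m
  rw [MvPolynomial.coeff_C]
  split_ifs with hm
  · rw [hm]
  · obtain ⟨i, hi⟩ := Finsupp.ne_iff.1 (Ne.symm hm)
    have hcoeff := congrArg (MvPolynomial.coeff (m - Finsupp.single i 1)) (h i)
    have hm' : m - Finsupp.single i 1 + Finsupp.single i 1 = m :=
      tsub_add_cancel_of_le (Finsupp.single_le_iff.2 (Nat.one_le_iff_ne_zero.2 hi))
    rw [MvPolynomial.coeff_pderiv, hm', MvPolynomial.coeff_zero, mul_eq_zero] at hcoeff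
    exact hcoeff.resolve_right (Nat.cast_add_one_ne_zero _)

lemma hausdorffMeasure_regular_zeros_eq_zero {d : ℝ} (hd0 : 0 ≤ d) (hd : (n : ℝ) - 1 < d)
    (P : MvPolynomial (Fin n) ℝ) (i : Fin n) :
    μH[d] {z : Rn n | MvPolynomial.eval z P = 0 ∧
      MvPolynomial.eval z (MvPolynomial.pderiv i P) ≠ 0} = 0 := by
  refine measure_null_of_locally_null _ fun z ⟨hz, hz'⟩ => ?_
  have hderiv := hasStrictFDerivAt_eval P z
  have hsurj : (∑ j, MvPolynomial.eval z (MvPolynomial.pderiv j P) •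
      (ContinuousLinearMap.proj j : Rn n →L[ℝ] ℝ)).range = ⊤ := by
    refine LinearMap.range_eq_top.2 (LinearMap.surjective_of_ne_zero fun h0 => hz' ?_)
    simpa [Pi.single_apply] using LinearMap.congr_fun h0 (Pi.single i 1)
  obtain ⟨U, hU, hnull⟩ := exists_nhds_hausdorffMeasure_level_eq_zero hderiv hsurj hd0
    (by rw [Module.finrank_fin_fun, Module.finrank_self]; push_cast; linarith)
  refine ⟨U ∩ _, inter_mem (mem_nhdsWithin_of_mem_nhds hU) self_mem_nhdsWithin,
    measure_mono_null (inter_subset_inter_right U fun y hy => ?_) hnull⟩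
  exact hy.1.trans hz.symm

theorem hausdorffMeasure_zeros_eq_zero {d : ℝ} (hd0 : 0 ≤ d) (hd : (n : ℝ) - 1 < d)
    (P : MvPolynomial (Fin n) ℝ) (hP : P ≠ 0) :
    μH[d] {z : Rn n | MvPolynomial.eval z P = 0} = 0 := by
  induction hdeg : P.totalDegree using Nat.strong_induction_on generalizing P with
  | _ N ih =>
  by_cases h : ∃ i, MvPolynomial.pderiv i P ≠ 0
  · obtain ⟨i, hi⟩ := h
    have hsingular := ih _ (hdeg ▸ totalDegree_pderiv_lt hi) _ hi rfl
    refine measure_mono_null (fun z hz => ?_)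
      (measure_union_null (hausdorffMeasure_regular_zeros_eq_zero hd0 hd P i) hsingular)
    exact or_iff_not_imp_right.2 fun hz' => ⟨hz, hz'⟩
  · push Not at h
    have hC := eq_C_of_forall_pderiv_eq_zero h
    have hcoeff : P.coeff 0 ≠ 0 := fun h0 => hP (by rw [hC, h0, map_zero])
    have : {z : Rn n | MvPolynomial.eval z P = 0} = ∅ := by
      rw [hC]
      exact eq_empty_of_forall_notMem fun z hz => hcoeff (by simpa using hz)
    rw [this, measure_empty]

end ZeroSets

section UpperRegular

lemma exists_erpow_eq {d : ℝ} (hd : 0 < d) {e : ℝ≥0∞} (he0 : e ≠ 0) (he1 : e ≤ 1) :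
    ∃ ρ : ℝ, 0 < ρ ∧ ρ ≤ 1 ∧ erpow ρ d = e := by
  have htop : e ≠ ⊤ := ne_top_of_le_ne_top ENNReal.one_ne_top he1
  have hpos : 0 < e.toReal := ENNReal.toReal_pos he0 htop
  have hle : e.toReal ≤ 1 := ENNReal.toReal_le_of_le_ofReal zero_le_one (by simpa using he1)
  refine ⟨e.toReal ^ (1 / d), by positivity, Real.rpow_le_one hpos.le hle (by positivity), ?_⟩
  rw [erpow, ← Real.rpow_mul hpos.le, one_div_mul_cancel hd.ne', Real.rpow_one,
    ENNReal.ofReal_toReal htop]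

lemma exists_subset_ball_of_ediam_rpow_lt {X : Type*} [MetricSpace X] [Nonempty X] {d : ℝ}
    (hd : 0 < d) {t : Set X} {ρ : ℝ} (hρ : 0 < ρ) (ht : ⨆ _ : t.Nonempty, ediam t ^ d < erpow ρ d) :
    ∃ z : X, t ⊆ ball z ρ := by
  rcases t.eq_empty_or_nonempty with rfl | hne
  · exact ⟨Classical.arbitrary X, empty_subset _⟩
  · obtain ⟨z, hz⟩ := id hne
    rw [iSup_pos hne, erpow, ← ENNReal.ofReal_rpow_of_pos hρ, ENNReal.rpow_lt_rpow_iff hd] at ht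
    exact ⟨z, fun y hy => edist_lt_ofReal.1 ((edist_le_ediam_of_mem hy hz).trans_lt ht)⟩

variable {X : Type*} [MetricSpace X] [MeasurableSpace X]

/-- Upper `d`-regularity of a measure at the scales `ρ ≤ R`, uniformly over all centres. -/
def IsUpperRegular (d : ℝ) (K : ℝ≥0) (R : ℝ) (μ : Measure X) : Prop :=
  ∀ z : X, ∀ ρ : ℝ, 0 < ρ → ρ ≤ R → μ (closedBall z ρ) ≤ K * erpow ρ d

variable [BorelSpace X] {d : ℝ}

lemma exists_cover_tsum_ediam_rpow_lt {Z : Set X} (hZ : μH[d] Z = 0) {κ : ℝ≥0∞} (hκ : 0 < κ) :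
    ∃ t : ℕ → Set X, Z ⊆ ⋃ i, t i ∧ ∑' i, ⨆ _ : (t i).Nonempty, ediam (t i) ^ d < κ := by
  rw [Measure.hausdorffMeasure_apply] at hZ
  have hlt : (⨅ (t : ℕ → Set X) (_ : Z ⊆ ⋃ i, t i) (_ : ∀ i, ediam (t i) ≤ 1),
      ∑' i, ⨆ _ : (t i).Nonempty, ediam (t i) ^ d) < κ :=
    ((le_iSup₂_of_le (1 : ℝ≥0∞) one_pos le_rfl).trans_eq hZ).trans_lt hκ
  simp only [iInf_lt_iff] at hlt
  obtain ⟨t, hcover, -, hsum⟩ := hlt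
  exact ⟨t, hcover, hsum⟩

lemma exists_cover_ball_tsum_erpow_le [Nonempty X] (hd : 0 < d) {Z : Set X} (hZ : μH[d] Z = 0)
    {κ : ℝ≥0∞} (hκ0 : κ ≠ 0) (hκ1 : κ ≤ 1) :
    ∃ (z : ℕ → X) (ρ : ℕ → ℝ), (∀ i, 0 < ρ i ∧ ρ i ≤ 1) ∧ Z ⊆ ⋃ i, ball (z i) (ρ i) ∧
      ∑' i, erpow (ρ i) d ≤ κ := by
  obtain ⟨t, hcover, hsum⟩ := exists_cover_tsum_ediam_rpow_lt hZ (ENNReal.half_pos hκ0)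
  obtain ⟨ε, hε, hεsum⟩ := ENNReal.exists_pos_sum_of_countable (ENNReal.half_pos hκ0).ne' ℕ
  let e : ℕ → ℝ≥0∞ := fun i => ⨆ _ : (t i).Nonempty, ediam (t i) ^ d
  have hε0 : ∀ i, (ε i : ℝ≥0∞) ≠ 0 := fun i => ENNReal.coe_ne_zero.2 (hε i).ne'
  have htotal : ∑' i, (e i + ε i) ≤ κ := by
    rw [ENNReal.tsum_add, ← ENNReal.add_halves κ]
    exact add_le_add hsum.le hεsum.le
  have hle1 : ∀ i, e i + ε i ≤ 1 := fun i => ((ENNReal.le_tsum i).trans htotal).trans hκ1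
  choose ρ hρ0 hρ1 hρ using fun i => exists_erpow_eq hd
    (fun h => hε0 i (add_eq_zero.1 h).2) (hle1 i)
  have hball : ∀ i, ∃ z, t i ⊆ ball z (ρ i) := fun i => by
    refine exists_subset_ball_of_ediam_rpow_lt hd (hρ0 i) ?_
    rw [hρ i]
    exact ENNReal.lt_add_right
      (ne_top_of_le_ne_top ENNReal.one_ne_top (le_self_add.trans (hle1 i))) (hε0 i)
  choose z hz using hball
  exact ⟨z, ρ, fun i => ⟨hρ0 i, hρ1 i⟩, hcover.trans (iUnion_mono hz), by simpa only [hρ]⟩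

lemma exists_isOpen_superset_forall_measure_le [Nonempty X] (hd : 0 < d) {Z : Set X}
    (hZ : μH[d] Z = 0) {κ : ℝ≥0∞} (hκ0 : κ ≠ 0) (hκ1 : κ ≤ 1) :
    ∃ U : Set X, IsOpen U ∧ Z ⊆ U ∧ ∀ (K : ℝ≥0) (μ : Measure X), IsUpperRegular d K 1 μ →
      μ U ≤ K * κ := by
  obtain ⟨z, ρ, hρ, hcover, hsum⟩ := exists_cover_ball_tsum_erpow_le hd hZ hκ0 hκ1
  refine ⟨⋃ i, ball (z i) (ρ i), isOpen_iUnion fun _ => isOpen_ball, hcover, fun K μ hμ => ?_⟩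
  calc μ (⋃ i, ball (z i) (ρ i)) ≤ ∑' i, μ (ball (z i) (ρ i)) := measure_iUnion_le _
    _ ≤ ∑' i, K * erpow (ρ i) d := ENNReal.tsum_le_tsum fun i =>
        (measure_mono ball_subset_closedBall).trans (hμ _ _ (hρ i).1 (hρ i).2)
    _ = K * ∑' i, erpow (ρ i) d := ENNReal.tsum_mul_left
    _ ≤ K * κ := by gcongr

lemma exists_pos_forall_le_setLIntegral [Nonempty X] (hd : 0 < d) {B : Set X} (hB : IsCompact B)
    {g : X → ℝ} (hg : Continuous g) (hnull : μH[d] {y | g y = 0} = 0) (K : ℝ≥0) {c : ℝ≥0}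
    (hc : 0 < c) :
    ∃ ε : ℝ≥0, 0 < ε ∧ ∀ μ : Measure X, IsUpperRegular d K 1 μ → c ≤ μ B →
      ε ≤ ∫⁻ y in B, ‖g y‖ₑ ∂μ := by
  let κ : ℝ≥0 := min 1 (c / (2 * (K + 1)))
  have hKκ : K * κ ≤ c / 2 := by
    calc K * κ ≤ (K + 1) * (c / (2 * (K + 1))) := by
          gcongr
          exacts [le_self_add, min_le_right _ _]
      _ = c / 2 := by field_simp
  obtain ⟨U, hUo, hZU, hU⟩ := exists_isOpen_superset_forall_measure_le hd hnull (κ := κ)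
    (ENNReal.coe_ne_zero.2 (by positivity)) (by exact_mod_cast min_le_left _ _)
  obtain ⟨δ, hδ, hδg⟩ : ∃ δ : ℝ≥0, 0 < δ ∧ ∀ y ∈ B \ U, δ ≤ ‖g y‖₊ := by
    rcases (B \ U).eq_empty_or_nonempty with h | h
    · exact ⟨1, one_pos, by simp [h]⟩
    · obtain ⟨y, hy, hmin⟩ := (hB.diff hUo).exists_isMinOn h hg.nnnorm.continuousOn
      exact ⟨‖g y‖₊, nnnorm_pos.2 fun h0 => hy.2 (hZU h0), fun y' hy' => hmin hy'⟩
  refine ⟨δ * (c / 2), by positivity, fun μ hμ hcμ => ?_⟩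
  have hlarge : ((c / 2 : ℝ≥0) : ℝ≥0∞) ≤ μ (B \ U) := by
    refine (ENNReal.add_le_add_iff_right (ENNReal.coe_ne_top (r := c / 2))).1 ?_
    calc ((c / 2 : ℝ≥0) : ℝ≥0∞) + (c / 2 : ℝ≥0) = c := by rw [← ENNReal.coe_add, add_halves]
      _ ≤ μ B := hcμ
      _ ≤ μ (B \ U) + μ U := (measure_mono (by simp)).trans (measure_union_le _ _)
      _ ≤ μ (B \ U) + (c / 2 : ℝ≥0) := by
          gcongr
          exact (hU K μ hμ).trans (by exact_mod_cast hKκ)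
  calc ((δ * (c / 2) : ℝ≥0) : ℝ≥0∞) = δ * (c / 2 : ℝ≥0) := ENNReal.coe_mul _ _
    _ ≤ δ * μ (B \ U) := by gcongr
    _ = ∫⁻ _ in B \ U, (δ : ℝ≥0∞) ∂μ := (setLIntegral_const _ _).symm
    _ ≤ ∫⁻ y in B \ U, ‖g y‖ₑ ∂μ :=
        setLIntegral_mono hg.enorm.measurable fun y hy => ENNReal.coe_le_coe.2 (hδg y hy)
    _ ≤ _ := lintegral_mono_set sdiff_subset

end UpperRegular

section Combinations

variable {X ι : Type*} [MetricSpace X] [Fintype ι] {φ : ι → X → ℝ}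

lemma exists_enorm_sum_mul_le (hφ : ∀ i, Continuous (φ i)) {B : Set X} (hB : IsCompact B) :
    ∃ M : ℝ≥0, ∀ a : ι → ℝ, ∀ y ∈ B, ‖∑ i, a i * φ i y‖ₑ ≤ M * ‖a‖ₑ := by
  choose C hC using fun i => hB.exists_bound_of_continuousOn (hφ i).continuousOn
  refine ⟨∑ i, (C i).toNNReal, fun a y hy => ?_⟩
  calc ‖∑ i, a i * φ i y‖ₑ ≤ ∑ i, ‖a i * φ i y‖ₑ := enorm_sum_le _ _
    _ ≤ ∑ i, (C i).toNNReal * ‖a‖ₑ := by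
        refine Finset.sum_le_sum fun i _ => ?_
        rw [enorm_mul, mul_comm]
        gcongr
        · exact ENNReal.coe_le_coe.2 (NNReal.le_toNNReal_of_coe_le (hC i y hy))
        · exact ENNReal.coe_le_coe.2 (nnnorm_le_pi_nnnorm a i)
    _ = _ := by rw [← Finset.sum_mul, ENNReal.ofNNReal_finsetSum]

variable [MeasurableSpace X] [BorelSpace X] {d : ℝ}

lemma exists_setLIntegral_sum_mul_le_add [ProperSpace X] (hφ : ∀ i, Continuous (φ i)) (x₀ : X)
    (K : ℝ≥0) :
    ∃ M : ℝ≥0, ∀ μ : Measure X, IsUpperRegular d K 1 μ → ∀ a b : ι → ℝ,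
      ∫⁻ y in closedBall x₀ 1, ‖∑ i, a i * φ i y‖ₑ ∂μ ≤
        ∫⁻ y in closedBall x₀ 1, ‖∑ i, b i * φ i y‖ₑ ∂μ + M * ‖a - b‖ₑ := by
  obtain ⟨M, hM⟩ := exists_enorm_sum_mul_le hφ (isCompact_closedBall x₀ 1)
  refine ⟨M * K, fun μ hμ a b => ?_⟩
  have hmass : μ (closedBall x₀ 1) ≤ K := by
    simpa [erpow] using hμ x₀ 1 one_pos le_rfl
  calc ∫⁻ y in closedBall x₀ 1, ‖∑ i, a i * φ i y‖ₑ ∂μ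
      ≤ ∫⁻ y in closedBall x₀ 1, (‖∑ i, b i * φ i y‖ₑ + M * ‖a - b‖ₑ) ∂μ := by
        refine setLIntegral_mono (by fun_prop) fun y hy => ?_
        have hsplit : ∑ i, a i * φ i y = ∑ i, b i * φ i y + ∑ i, (a - b) i * φ i y := by
          simp only [Pi.sub_apply, sub_mul, Finset.sum_sub_distrib, add_sub_cancel]
        rw [hsplit]
        exact (enorm_add_le _ _).trans (add_le_add_right (hM _ y hy) _)
    _ = ∫⁻ y in closedBall x₀ 1, ‖∑ i, b i * φ i y‖ₑ ∂μ +
          M * ‖a - b‖ₑ * μ (closedBall x₀ 1) := by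
        rw [lintegral_add_right _ measurable_const, setLIntegral_const]
    _ ≤ _ := by
        rw [ENNReal.coe_mul, mul_right_comm]
        gcongr

lemma exists_pos_forall_sphere_le_setLIntegral [ProperSpace X] (hd : 0 < d)
    (hφ : ∀ i, Continuous (φ i)) (hnull : ∀ a : ι → ℝ, a ≠ 0 → μH[d] {y | ∑ i, a i * φ i y = 0} = 0)
    (x₀ : X) (K : ℝ≥0) {c : ℝ≥0} (hc : 0 < c) :
    ∃ ε : ℝ≥0, 0 < ε ∧ ∀ a ∈ sphere (0 : ι → ℝ) 1, ∀ μ : Measure X, IsUpperRegular d K 1 μ →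
      c ≤ μ (closedBall x₀ 1) → ε ≤ ∫⁻ y in closedBall x₀ 1, ‖∑ i, a i * φ i y‖ₑ ∂μ := by
  have : Nonempty X := ⟨x₀⟩
  obtain ⟨M, hM⟩ := exists_setLIntegral_sum_mul_le_add (d := d) hφ x₀ K
  refine (isCompact_sphere (0 : ι → ℝ) 1).induction_on (p := fun s => ∃ ε : ℝ≥0, 0 < ε ∧ ∀ a ∈ s,
    ∀ μ : Measure X, IsUpperRegular d K 1 μ → c ≤ μ (closedBall x₀ 1) →
      ε ≤ ∫⁻ y in closedBall x₀ 1, ‖∑ i, a i * φ i y‖ₑ ∂μ) ⟨1, one_pos, by simp⟩ ?_ ?_ ?_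
  · exact fun s t hst ⟨ε, hε, h⟩ => ⟨ε, hε, fun a ha => h a (hst ha)⟩
  · rintro s t ⟨ε, hε, h⟩ ⟨ε', hε', h'⟩
    refine ⟨min ε ε', lt_min hε hε', ?_⟩
    rintro a (ha | ha) μ hμ hcμ
    · exact (ENNReal.coe_le_coe.2 (min_le_left _ _)).trans (h a ha μ hμ hcμ)
    · exact (ENNReal.coe_le_coe.2 (min_le_right _ _)).trans (h' a ha μ hμ hcμ)
  · intro a ha
    obtain ⟨ε, hε, h⟩ := exists_pos_forall_le_setLIntegral hd (isCompact_closedBall x₀ 1)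
      (by fun_prop) (hnull a (ne_zero_of_mem_unit_sphere ⟨a, ha⟩)) K hc
    have hsmall : ∀ᶠ b in 𝓝 a, M * ‖a - b‖ₑ < (ε / 2 : ℝ≥0) := by
      have hcont : Tendsto (fun b : ι → ℝ => (M : ℝ≥0∞) * ‖a - b‖ₑ) (𝓝 a) (𝓝 (M * ‖a - a‖ₑ)) :=
        ENNReal.Tendsto.const_mul ((tendsto_const_nhds.sub tendsto_id).enorm)
          (Or.inr ENNReal.coe_ne_top)
      refine hcont.eventually_lt_const ?_
      simpa using hε.ne'
    refine ⟨_, mem_nhdsWithin_of_mem_nhds hsmall, ε / 2, by positivity, fun b hb μ hμ hcμ => ?_⟩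
    refine (ENNReal.add_le_add_iff_right (ENNReal.coe_ne_top (r := ε / 2))).1 ?_
    calc ((ε / 2 : ℝ≥0) : ℝ≥0∞) + (ε / 2 : ℝ≥0) = ε := by rw [← ENNReal.coe_add, add_halves]
      _ ≤ _ := h μ hμ hcμ
      _ ≤ _ := hM μ hμ a b
      _ ≤ _ := add_le_add_right (le_of_lt hb) _

theorem exists_enorm_sum_mul_le_setLIntegral [ProperSpace X] (hd : 0 < d)
    (hφ : ∀ i, Continuous (φ i)) (hnull : ∀ a : ι → ℝ, a ≠ 0 → μH[d] {y | ∑ i, a i * φ i y = 0} = 0)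
    (x₀ : X) (K : ℝ≥0) {c : ℝ≥0} (hc : 0 < c) {B : Set X} (hB : IsCompact B) :
    ∃ A : ℝ≥0, ∀ a : ι → ℝ, ∀ μ : Measure X, IsUpperRegular d K 1 μ → c ≤ μ (closedBall x₀ 1) →
      ∀ y ∈ B, ‖∑ i, a i * φ i y‖ₑ ≤ A * ∫⁻ z in closedBall x₀ 1, ‖∑ i, a i * φ i z‖ₑ ∂μ := by
  obtain ⟨M, hM⟩ := exists_enorm_sum_mul_le hφ hB
  obtain ⟨ε, hε, h⟩ := exists_pos_forall_sphere_le_setLIntegral hd hφ hnull x₀ K hc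
  have hε' : (ε : ℝ≥0∞) ≠ 0 := ENNReal.coe_ne_zero.2 hε.ne'
  refine ⟨M / ε, fun a μ hμ hcμ y hy => ?_⟩
  have hcoef : ‖a‖ₑ * ε ≤ ∫⁻ z in closedBall x₀ 1, ‖∑ i, a i * φ i z‖ₑ ∂μ := by
    rcases eq_or_ne a 0 with rfl | ha
    · simp
    have hunit : ‖a‖⁻¹ • a ∈ sphere (0 : ι → ℝ) 1 := by
      simp [norm_smul, norm_ne_zero_iff.2 ha]
    calc ‖a‖ₑ * ε
        ≤ ‖a‖ₑ * ∫⁻ z in closedBall x₀ 1, ‖∑ i, (‖a‖⁻¹ • a) i * φ i z‖ₑ ∂μ := by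
          gcongr
          exact h _ hunit μ hμ hcμ
      _ = ∫⁻ z in closedBall x₀ 1, ‖∑ i, a i * φ i z‖ₑ ∂μ := by
          rw [← lintegral_const_mul _ (by fun_prop)]
          refine lintegral_congr fun z => ?_
          simp only [Pi.smul_apply, smul_eq_mul, mul_assoc, ← Finset.mul_sum]
          rw [enorm_mul, ← mul_assoc, ← enorm_norm a, ← enorm_mul,
            mul_inv_cancel₀ (norm_ne_zero_iff.2 ha), enorm_one, one_mul]
  calc ‖∑ i, a i * φ i y‖ₑ ≤ M * ‖a‖ₑ := hM a y hy
    _ = (M / ε : ℝ≥0) * (‖a‖ₑ * ε) := by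
        rw [ENNReal.coe_div hε.ne', mul_comm ‖a‖ₑ, ← mul_assoc,
          ENNReal.div_mul_cancel hε' ENNReal.coe_ne_top]
    _ ≤ _ := by gcongr

end Combinations

section Blowup

variable {E : Type*} [NormedAddCommGroup E] [NormedSpace ℝ E] [MeasurableSpace E]

/-- The blow-up of a measure at the point `w` and the scale `t`, normalised so that `d`-regularity
is preserved. -/
def blowup (d : ℝ) (w : E) (t : ℝ) (μ : Measure E) : Measure E :=
  erpow t (-d) • μ.map fun y => t⁻¹ • (y - w)

variable [BorelSpace E] {d t : ℝ} {w : E} {μ : Measure E}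

lemma setLIntegral_blowup (ht : 0 < t) (z : E) (ρ : ℝ) {g : E → ℝ≥0∞} (hg : Measurable g) :
    ∫⁻ y in closedBall z ρ, g y ∂blowup d w t μ =
      erpow t (-d) * ∫⁻ y in closedBall (w + t • z) (t * ρ), g (t⁻¹ • (y - w)) ∂μ := by
  have hpre : (fun y => t⁻¹ • (y - w)) ⁻¹' closedBall z ρ = closedBall (w + t • z) (t * ρ) := by
    ext y
    have hdist : t⁻¹ • (y - w) - z = t⁻¹ • (y - (w + t • z)) := by
      rw [← sub_sub, smul_sub t⁻¹ (y - w), smul_smul, inv_mul_cancel₀ ht.ne', one_smul]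
    rw [mem_preimage, mem_closedBall, mem_closedBall, dist_eq_norm, dist_eq_norm, hdist, norm_smul,
      norm_inv, Real.norm_of_nonneg ht.le, inv_mul_le_iff₀ ht]
  have hmeas : Measurable fun y : E => t⁻¹ • (y - w) :=
    ((continuous_id.sub continuous_const).const_smul _).measurable
  rw [blowup, Measure.restrict_smul, lintegral_smul_measure, smul_eq_mul,
    setLIntegral_map measurableSet_closedBall hg hmeas, hpre]

lemma blowup_closedBall (ht : 0 < t) (z : E) (ρ : ℝ) :
    blowup d w t μ (closedBall z ρ) = erpow t (-d) * μ (closedBall (w + t • z) (t * ρ)) := by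
  simpa only [setLIntegral_one] using
    setLIntegral_blowup (d := d) (w := w) (μ := μ) ht z ρ (g := fun _ => 1) measurable_const

lemma IsUpperRegular.blowup {K : ℝ≥0} {R : ℝ} (hμ : IsUpperRegular d K R μ) (w : E) (ht : 0 < t)
    (htR : t ≤ R) : IsUpperRegular d K 1 (blowup d w t μ) := by
  intro z ρ hρ hρ1
  calc _ = erpow t (-d) * μ (closedBall (w + t • z) (t * ρ)) := blowup_closedBall ht z ρ
    _ ≤ erpow t (-d) * (K * erpow (t * ρ) d) := by
        gcongr
        exact hμ _ _ (by positivity) ((mul_le_of_le_one_right ht.le hρ1).trans htR)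
    _ = erpow t (-d) * erpow t d * (K * erpow ρ d) := by rw [mul_erpow ht.le hρ.le]; ring
    _ = K * erpow ρ d := by rw [erpow_neg_mul_self ht, one_mul]

end Blowup

section Markov

variable {n : ℕ} {d : ℝ}

lemma totalDegree_bind₁_le {σ τ R : Type*} [CommSemiring R] {g : σ → MvPolynomial τ R}
    (hg : ∀ i, (g i).totalDegree ≤ 1) (P : MvPolynomial σ R) :
    (MvPolynomial.bind₁ g P).totalDegree ≤ P.totalDegree := by
  conv_lhs => rw [P.as_sum]
  rw [map_sum]
  refine MvPolynomial.totalDegree_finsetSum_le fun m hm => ?_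
  rw [MvPolynomial.bind₁_monomial]
  calc (MvPolynomial.C (P.coeff m) * ∏ i ∈ m.support, g i ^ m i).totalDegree
      ≤ (∏ i ∈ m.support, g i ^ m i).totalDegree := by
        simpa using MvPolynomial.totalDegree_mul (MvPolynomial.C (P.coeff m)) _
    _ ≤ ∑ i ∈ m.support, (g i ^ m i).totalDegree := MvPolynomial.totalDegree_finsetProd _ _
    _ ≤ ∑ i ∈ m.support, m i := Finset.sum_le_sum fun i _ =>
        (MvPolynomial.totalDegree_pow _ _).trans (mul_le_of_le_one_right' (hg i))
    _ ≤ P.totalDegree := MvPolynomial.le_totalDegree hm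

lemma exists_eval_eq_eval_add_smul (P : MvPolynomial (Fin n) ℝ) (w : Rn n) (t : ℝ) :
    ∃ Q : MvPolynomial (Fin n) ℝ, Q.totalDegree ≤ P.totalDegree ∧
      ∀ y : Rn n, MvPolynomial.eval y Q = MvPolynomial.eval (w + t • y) P := by
  refine ⟨MvPolynomial.bind₁ (fun i => MvPolynomial.C (w i) + t • MvPolynomial.X i) P,
    totalDegree_bind₁_le (fun i => ?_) P, fun y => ?_⟩
  · refine (MvPolynomial.totalDegree_add _ _).trans (max_le (by simp) ?_)
    exact (MvPolynomial.totalDegree_smul_le _ _).trans (MvPolynomial.totalDegree_X i).le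
  · induction P using MvPolynomial.induction_on with
    | C a => simp
    | add P Q hP hQ => simp only [map_add, hP, hQ]
    | mul_X P i hP => simp [hP]

lemma exists_enorm_eval_le_setLIntegral_unit (hd0 : 0 < d) (hd : (n : ℝ) - 1 < d) (N : ℕ)
    (K : ℝ≥0) {c : ℝ≥0} (hc : 0 < c) :
    ∃ A : ℝ≥0, ∀ P : MvPolynomial (Fin n) ℝ, P.totalDegree ≤ N →
      ∀ μ : Measure (Rn n), IsUpperRegular d K 1 μ → c ≤ μ (closedBall 0 1) →
      ∀ y ∈ closedBall (0 : Rn n) 2, ‖MvPolynomial.eval y P‖ₑ ≤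
        A * ∫⁻ z in closedBall 0 1, ‖MvPolynomial.eval z P‖ₑ ∂μ := by
  let V := MvPolynomial.restrictTotalDegree (Fin n) ℝ N
  let b := Module.finBasis ℝ V
  have hnull : ∀ a : Fin (Module.finrank ℝ V) → ℝ, a ≠ 0 →
      μH[d] {y : Rn n | ∑ i, a i * MvPolynomial.eval y (b i : MvPolynomial (Fin n) ℝ) = 0} = 0 := by
    intro a ha
    have hP : ((b.equivFun.symm a : V) : MvPolynomial (Fin n) ℝ) ≠ 0 := by
      rwa [Ne, ZeroMemClass.coe_eq_zero, LinearEquiv.map_eq_zero_iff]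
    have := hausdorffMeasure_zeros_eq_zero hd0.le hd _ hP
    simpa [b.equivFun_symm_apply, MvPolynomial.smul_eval] using this
  obtain ⟨A, hA⟩ := exists_enorm_sum_mul_le_setLIntegral hd0
    (fun i => MvPolynomial.continuous_eval (b i : MvPolynomial (Fin n) ℝ)) hnull 0 K hc
    (isCompact_closedBall (0 : Rn n) 2)
  refine ⟨A, fun P hP μ hμ hcμ y hy => ?_⟩
  let P' : V := ⟨P, (MvPolynomial.mem_restrictTotalDegree _ _ _).2 hP⟩
  have heval : ∀ z : Rn n, ∑ i, b.equivFun P' i * MvPolynomial.eval z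
      (b i : MvPolynomial (Fin n) ℝ) = MvPolynomial.eval z P := fun z => by
    conv_rhs => rw [show P = (P' : MvPolynomial (Fin n) ℝ) from rfl, ← b.sum_equivFun P']
    simp only [Submodule.coe_sum, Submodule.coe_smul, map_sum, MvPolynomial.smul_eval]
  simpa only [heval] using hA (b.equivFun P') μ hμ hcμ y hy

theorem exists_enorm_eval_le_setLIntegral (hd0 : 0 < d) (hd : (n : ℝ) - 1 < d) (N : ℕ)
    (K : ℝ≥0) {c : ℝ≥0} (hc : 0 < c) :
    ∃ A : ℝ≥0, ∀ (μ : Measure (Rn n)) (w : Rn n) (t R : ℝ), 0 < t → t ≤ R →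
      IsUpperRegular d K R μ → c * erpow t d ≤ μ (closedBall w t) →
      ∀ P : MvPolynomial (Fin n) ℝ, P.totalDegree ≤ N → ∀ y ∈ closedBall w (2 * t),
      ‖MvPolynomial.eval y P‖ₑ ≤
        A * (erpow t (-d) * ∫⁻ z in closedBall w t, ‖MvPolynomial.eval z P‖ₑ ∂μ) := by
  obtain ⟨A, hA⟩ := exists_enorm_eval_le_setLIntegral_unit hd0 hd N K hc
  refine ⟨A, fun μ w t R ht htR hμ hcμ P hP y hy => ?_⟩
  obtain ⟨Q, hQdeg, hQ⟩ := exists_eval_eq_eval_add_smul P w t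
  have hinv : ∀ z, w + t • t⁻¹ • (z - w) = z := fun z => by
    rw [smul_smul, mul_inv_cancel₀ ht.ne', one_smul, add_sub_cancel]
  have hmass : (c : ℝ≥0∞) ≤ blowup d w t μ (closedBall 0 1) := by
    rw [blowup_closedBall ht, smul_zero, add_zero, mul_one]
    calc (c : ℝ≥0∞) = erpow t (-d) * (c * erpow t d) := by
          rw [mul_left_comm, erpow_neg_mul_self ht, mul_one]
      _ ≤ _ := by gcongr
  have hy' : t⁻¹ • (y - w) ∈ closedBall (0 : Rn n) 2 := by
    rw [mem_closedBall_zero_iff, norm_smul, norm_inv, Real.norm_of_nonneg ht.le, ← dist_eq_norm,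
      inv_mul_le_iff₀ ht, mul_comm]
    exact hy
  have := hA Q (hQdeg.trans hP) _ (hμ.blowup w ht htR) hmass _ hy'
  rw [setLIntegral_blowup ht _ _ (MvPolynomial.continuous_eval Q).enorm.measurable] at this
  simpa only [hQ, hinv, smul_zero, add_zero, mul_one] using this

end Markov

namespace IsDSet

variable {n : ℕ} {S : Set (Rn n)} {d C₀ : ℝ}

lemma exists_isUpperRegular (hS : IsDSet S d C₀) :
    ∃ K : ℝ≥0, IsUpperRegular d K (1 / 2) ((μH[d] : Measure (Rn n)).restrict S) := by
  have hC₀ : 0 ≤ C₀ := by linarith [hS.2.1]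
  refine ⟨C₀.toNNReal * ((2 : ℝ) ^ d).toNNReal, fun z r hr hr2 => ?_⟩
  rw [Measure.restrict_apply measurableSet_closedBall]
  rcases (closedBall z r ∩ S).eq_empty_or_nonempty with h | ⟨w, hw, hwS⟩
  · simp [h]
  · calc μH[d] (closedBall z r ∩ S) ≤ μH[d] (closedBall w (2 * r) ∩ S) := by
          refine measure_mono (inter_subset_inter_left _ (closedBall_subset_closedBall' ?_))
          rw [dist_comm]
          linarith [mem_closedBall.1 hw]
      _ ≤ ENNReal.ofReal (C₀ * (2 * r) ^ d) :=
          (hS.2.2 w hwS (2 * r) (by linarith) (by linarith)).2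
      _ = C₀.toNNReal * (erpow 2 d * erpow r d) := by
          rw [ENNReal.ofReal_mul hC₀, ← mul_erpow zero_le_two hr.le]; rfl
      _ = _ := by rw [ENNReal.coe_mul, mul_assoc]; rfl

lemma exists_erpow_le_hausdorffMeasure (hS : IsDSet S d C₀) :
    ∃ c : ℝ≥0, 0 < c ∧ ∀ w ∈ S, ∀ r : ℝ, 0 < r → r ≤ 1 →
      c * erpow r d ≤ μH[d] (closedBall w r ∩ S) := by
  have hC₀ : 0 < C₀⁻¹ := inv_pos.2 (by linarith [hS.2.1])
  refine ⟨C₀⁻¹.toNNReal, Real.toNNReal_pos.2 hC₀, fun w hw r hr hr1 => ?_⟩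
  exact (ENNReal.ofReal_mul hC₀.le).symm.trans_le (hS.2.2 w hw r hr hr1).1

theorem exists_enorm_eval_le (hS : IsDSet S d C₀) (hd0 : 0 < d) (hd : (n : ℝ) - 1 < d) (N : ℕ) :
    ∃ A : ℝ≥0, ∀ w ∈ S, ∀ t : ℝ, 0 < t → t ≤ 1 / 2 → ∀ P : MvPolynomial (Fin n) ℝ,
      P.totalDegree ≤ N → ∀ y ∈ closedBall w (2 * t), ‖MvPolynomial.eval y P‖ₑ ≤
        A * (erpow t (-d) * ∫⁻ z in closedBall w t ∩ S, ‖MvPolynomial.eval z P‖ₑ ∂μH[d]) := by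
  obtain ⟨K, hK⟩ := hS.exists_isUpperRegular
  obtain ⟨c, hc, hlower⟩ := hS.exists_erpow_le_hausdorffMeasure
  obtain ⟨A, hA⟩ := exists_enorm_eval_le_setLIntegral hd0 hd N K hc
  refine ⟨A, fun w hw t ht ht2 P hP y hy => ?_⟩
  rw [← Measure.restrict_restrict measurableSet_closedBall]
  refine hA _ w t _ ht ht2 hK ?_ P hP y hy
  rw [Measure.restrict_apply measurableSet_closedBall]
  exact hlower w hw t ht (by linarith)

end IsDSet

section Fubini

variable {X : Type*} [PseudoMetricSpace X] [SecondCountableTopology X] [MeasurableSpace X]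
  [OpensMeasurableSpace X]

lemma measurable_setLIntegral_closedBall {ν : Measure X} [SFinite ν] {F : X → X → ℝ≥0∞}
    (hF : Measurable (Function.uncurry F)) (r : ℝ) :
    Measurable fun x => ∫⁻ y in closedBall x r, F x y ∂ν := by
  have hset : MeasurableSet {z : X × X | dist z.2 z.1 ≤ r} :=
    measurableSet_le (by fun_prop) measurable_const
  simp only [← lintegral_indicator measurableSet_closedBall]
  exact (hF.indicator hset).lintegral_prod_right'

lemma lintegral_setLIntegral_closedBall_swap (μ ν : Measure X) [SFinite μ] [SFinite ν]
    {F : X → X → ℝ≥0∞} (hF : Measurable (Function.uncurry F)) (r : ℝ) :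
    ∫⁻ x, ∫⁻ y in closedBall x r, F x y ∂ν ∂μ = ∫⁻ y, ∫⁻ x in closedBall y r, F x y ∂μ ∂ν := by
  let s : Set (X × X) := {z | dist z.2 z.1 ≤ r}
  have hs : MeasurableSet s := measurableSet_le (by fun_prop) measurable_const
  calc ∫⁻ x, ∫⁻ y in closedBall x r, F x y ∂ν ∂μ
      = ∫⁻ x, ∫⁻ y, s.indicator (Function.uncurry F) (x, y) ∂ν ∂μ :=
        lintegral_congr fun x => (lintegral_indicator measurableSet_closedBall _).symm
    _ = ∫⁻ y, ∫⁻ x, s.indicator (Function.uncurry F) (x, y) ∂μ ∂ν :=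
        lintegral_lintegral_swap (hF.indicator hs).aemeasurable
    _ = _ := lintegral_congr fun y => by
        rw [← lintegral_indicator measurableSet_closedBall]
        simp only [s, indicator, mem_ofPred_eq, mem_closedBall, dist_comm y, Function.uncurry]

lemma lintegral_setLIntegral_closedBall (μ ν : Measure X) [SFinite μ] [SFinite ν] {g : X → ℝ≥0∞}
    (hg : Measurable g) (r : ℝ) :
    ∫⁻ x, ∫⁻ y in closedBall x r, g y ∂ν ∂μ = ∫⁻ y, g y * μ (closedBall y r) ∂ν := by
  rw [lintegral_setLIntegral_closedBall_swap μ ν (F := fun _ y => g y)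
    (hg.comp measurable_snd)]
  simp only [setLIntegral_const]

end Fubini

section LayerCake

variable {α : Type*} [MeasurableSpace α]

lemma exists_lintegral_erpow_le (a : ℝ) :
    ∃ K : ℝ≥0, ∀ (μ : Measure α) [SFinite μ] (ρ : α → ℝ), Measurable ρ → ∀ l R : ℝ,
      (∀ᵐ x ∂μ, 0 < ρ x ∧ l ≤ ρ x ∧ 2 * ρ x ≤ R) →
      ∫⁻ x, erpow (ρ x) a ∂μ ≤ K * ∫⁻ τ in Ioc l R, erpow τ (a - 1) * μ {x | ρ x ≤ τ} := by
  obtain ⟨K, hK⟩ := exists_erpow_le_lintegral_Ioo a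
  refine ⟨K, fun μ _ ρ hρ l R hbound => ?_⟩
  let s : Set (α × ℝ) := {z | ρ z.1 ≤ z.2}
  have hs : MeasurableSet s := measurableSet_le (by fun_prop) measurable_snd
  let F : α × ℝ → ℝ≥0∞ := s.indicator fun z => erpow z.2 (a - 1)
  have hF : Measurable F := Measurable.indicator (by fun_prop) hs
  have hpoint : ∀ x, 0 < ρ x → l ≤ ρ x → 2 * ρ x ≤ R →
      erpow (ρ x) a ≤ K * ∫⁻ τ in Ioc l R, F (x, τ) := fun x hx hl hR => by
    calc erpow (ρ x) a ≤ K * ∫⁻ τ in Ioo (ρ x) (2 * ρ x), erpow τ (a - 1) := hK _ hx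
      _ = K * ∫⁻ τ in Ioo (ρ x) (2 * ρ x), F (x, τ) := by
          congr 1
          refine setLIntegral_congr_fun measurableSet_Ioo fun τ hτ => ?_
          exact (indicator_of_mem (s := s) (a := (x, τ)) hτ.1.le
            fun z => erpow z.2 (a - 1)).symm
      _ ≤ _ := by
          gcongr
          exact fun τ hτ => ⟨hl.trans_lt hτ.1, hτ.2.le.trans hR⟩
  calc ∫⁻ x, erpow (ρ x) a ∂μ ≤ ∫⁻ x, (K * ∫⁻ τ in Ioc l R, F (x, τ)) ∂μ := by
        refine lintegral_mono_ae ?_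
        filter_upwards [hbound] with x hx using hpoint x hx.1 hx.2.1 hx.2.2
    _ = K * ∫⁻ τ in Ioc l R, ∫⁻ x, F (x, τ) ∂μ := by
        rw [lintegral_const_mul' _ _ ENNReal.coe_ne_top, lintegral_lintegral_swap]
        exact hF.aemeasurable
    _ = _ := by
        congr 1
        refine lintegral_congr fun τ => ?_
        exact lintegral_indicator_const (s := {x | ρ x ≤ τ}) (measurableSet_le hρ measurable_const)
          (erpow τ (a - 1))

end LayerCake

lemma IsUpperRegular.isLocallyFiniteMeasure {X : Type*} [MetricSpace X] [MeasurableSpace X]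
    {d R : ℝ} {K : ℝ≥0} {μ : Measure X} (hμ : IsUpperRegular d K R μ) (hR : 0 < R) :
    IsLocallyFiniteMeasure μ :=
  ⟨fun x => ⟨closedBall x R, closedBall_mem_nhds x hR, (hμ x R hR le_rfl).trans_lt
    (ENNReal.mul_lt_top ENNReal.coe_lt_top (erpow_ne_top R d).lt_top)⟩⟩

lemma mul_volume_infDist_le {n : ℕ} {S : Set (Rn n)} (hS : IsClosed S) (hne : S.Nonempty)
    {μ : Measure (Rn n)} [SFinite μ] {m : ℝ≥0∞} {ρ R : ℝ} (hρ : 0 < ρ) (hρR : ρ ≤ R)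
    (hm : ∀ w ∈ S, m ≤ μ (closedBall w ρ)) (z : Rn n) :
    m * volume (closedBall z R ∩ {y | infDist y S ≤ ρ}) ≤
      2 ^ n * erpow (2 * ρ) n * μ (closedBall z (3 * R)) := by
  have hmeas : MeasurableSet (closedBall z R ∩ {y | infDist y S ≤ ρ}) :=
    measurableSet_closedBall.inter (measurableSet_le measurable_infDist measurable_const)
  let ν := μ.restrict (closedBall z (3 * R))
  calc m * volume (closedBall z R ∩ {y | infDist y S ≤ ρ})
      = ∫⁻ _ in closedBall z R ∩ {y | infDist y S ≤ ρ}, m := (setLIntegral_const _ _).symm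
    _ ≤ ∫⁻ y in closedBall z R ∩ {y | infDist y S ≤ ρ}, ν (closedBall y (2 * ρ)) := by
        refine setLIntegral_mono' hmeas fun y ⟨hyz, hyS⟩ => ?_
        obtain ⟨w, hw, hyw⟩ := hS.exists_infDist_eq_dist hne y
        have hwy : dist w y ≤ ρ := by rw [dist_comm, ← hyw]; exact hyS
        refine (hm w hw).trans ?_
        rw [Measure.restrict_apply measurableSet_closedBall]
        refine measure_mono (subset_inter ?_ ?_)
        · exact closedBall_subset_closedBall' (by linarith)
        · exact closedBall_subset_closedBall'
            (by linarith [dist_triangle w y z, mem_closedBall.1 hyz])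
    _ ≤ ∫⁻ y, ν (closedBall y (2 * ρ)) := setLIntegral_le_lintegral _ _
    _ = ∫⁻ y, ∫⁻ _ in closedBall y (2 * ρ), 1 ∂ν := by simp only [setLIntegral_one]
    _ = ∫⁻ v, volume (closedBall v (2 * ρ)) ∂ν := by
        rw [lintegral_setLIntegral_closedBall volume ν measurable_const]
        simp only [one_mul]
    _ = _ := by
        simp only [volume_closedBall_eq_erpow _ (mul_pos two_pos hρ)]
        rw [lintegral_const, Measure.restrict_apply_univ]

lemma exists_mul_erpow_le_half {a : ℝ} (ha : 0 < a) (K : ℝ≥0) :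
    ∃ κ : ℝ, 0 < κ ∧ κ ≤ 1 ∧ K * erpow κ a ≤ 2⁻¹ := by
  have hlim : Tendsto (fun κ : ℝ => K * erpow κ a) (𝓝[>] 0) (𝓝 0) := by
    have hpow : Tendsto (fun κ : ℝ => κ ^ a) (𝓝 0) (𝓝 0) := by
      simpa only [Real.zero_rpow ha.ne'] using
        (Real.continuousAt_rpow_const 0 a (Or.inr ha.le)).tendsto
    simpa [erpow] using ENNReal.Tendsto.const_mul (a := (K : ℝ≥0∞))
      (ENNReal.tendsto_ofReal (hpow.mono_left nhdsWithin_le_nhds)) (Or.inr ENNReal.coe_ne_top)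
  have hhalf : (0 : ℝ≥0∞) < 2⁻¹ := ENNReal.inv_pos.2 ENNReal.ofNat_ne_top
  obtain ⟨κ, ⟨hκ, hκ0⟩, hκ1⟩ := ((hlim.eventually_le_const hhalf).and
    self_mem_nhdsWithin |>.and (nhdsWithin_le_nhds (Iic_mem_nhds one_pos))).exists
  exact ⟨κ, hκ0, hκ1, hκ⟩

namespace IsDSet

variable {n : ℕ} {S : Set (Rn n)} {d C₀ : ℝ}

lemma volume_eq_zero (hS : IsDSet S d C₀) (hd : d < n) : volume S = 0 := by
  refine measure_null_of_locally_null _ fun w hw => ⟨closedBall w 1 ∩ S,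
    inter_mem (mem_nhdsWithin_of_mem_nhds (closedBall_mem_nhds w one_pos)) self_mem_nhdsWithin, ?_⟩
  have hfinite : μH[d] (closedBall w 1 ∩ S) ≠ ⊤ :=
    ne_top_of_le_ne_top ENNReal.ofReal_ne_top (hS.2.2 w hw 1 one_pos le_rfl).2
  rw [← hausdorffMeasure_pi_real, Fintype.card_fin]
  exact (Measure.hausdorffMeasure_zero_or_top hd _).resolve_right hfinite

lemma ae_infDist_pos (hS : IsDSet S d C₀) (hne : S.Nonempty) (hd : d < n) :
    ∀ᵐ y : Rn n, 0 < infDist y S := by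
  filter_upwards [measure_eq_zero_iff_ae_notMem.1 (hS.volume_eq_zero hd)] with y hy
  exact (hS.1.notMem_iff_infDist_pos hne).1 hy

lemma exists_volume_infDist_le (hS : IsDSet S d C₀) (hne : S.Nonempty) :
    ∃ K : ℝ≥0, ∀ z : Rn n, ∀ R ρ : ℝ, 0 < ρ → ρ ≤ R → R ≤ 1 / 8 →
      volume (closedBall z R ∩ {y | infDist y S ≤ ρ}) ≤ K * (erpow ρ (n - d) * erpow R d) := by
  obtain ⟨K, hupper⟩ := hS.exists_isUpperRegular
  obtain ⟨c, hc, hlower⟩ := hS.exists_erpow_le_hausdorffMeasure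
  have := hupper.isLocallyFiniteMeasure (by norm_num)
  refine ⟨c⁻¹ * (2 ^ n * ((2 : ℝ) ^ (n : ℝ)).toNNReal * (K * ((3 : ℝ) ^ d).toNNReal)),
    fun z R ρ hρ hρR hR => ?_⟩
  have hmass : ∀ w ∈ S, c * erpow ρ d ≤ (μH[d]).restrict S (closedBall w ρ) := fun w hw => by
    rw [Measure.restrict_apply measurableSet_closedBall]
    exact hlower w hw ρ hρ (by linarith)
  have hcc : (c : ℝ≥0∞)⁻¹ * c = 1 :=
    ENNReal.inv_mul_cancel (ENNReal.coe_ne_zero.2 hc.ne') ENNReal.coe_ne_top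
  calc volume (closedBall z R ∩ {y | infDist y S ≤ ρ})
      = (c : ℝ≥0∞)⁻¹ * erpow ρ (-d) *
          (c * erpow ρ d * volume (closedBall z R ∩ {y | infDist y S ≤ ρ})) := by
        rw [← mul_assoc, mul_mul_mul_comm, hcc, erpow_neg_mul_self hρ, one_mul, one_mul]
    _ ≤ (c : ℝ≥0∞)⁻¹ * erpow ρ (-d) *
          (2 ^ n * erpow (2 * ρ) n * (K * erpow (3 * R) d)) := by
        refine mul_le_mul_right ((mul_volume_infDist_le hS.1 hne hρ hρR hmass z).trans ?_) _
        gcongr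
        exact hupper _ _ (by linarith) (by linarith)
    _ = (c : ℝ≥0∞)⁻¹ * (2 ^ n * erpow 2 n * (K * erpow 3 d)) *
          (erpow ρ (n - d) * erpow R d) := by
        rw [mul_erpow zero_le_two hρ.le, mul_erpow (by norm_num) (hρ.trans_le hρR).le,
          sub_eq_neg_add, erpow_add hρ]
        ring
    _ = _ := by
        push_cast [ENNReal.coe_inv hc.ne']
        rfl

lemma exists_setLIntegral_infDist_le (hS : IsDSet S d C₀) (hne : S.Nonempty) (hd : d < n) {a : ℝ}
    (ha : -(n - d) < a) :
    ∃ K : ℝ≥0, ∀ z : Rn n, ∀ R : ℝ, 0 < R → R ≤ 1 / 64 → infDist z S ≤ 2 * R →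
      ∫⁻ y in closedBall z R, erpow (infDist y S) a ≤ K * erpow R (n + a) := by
  obtain ⟨K₁, hlayer⟩ := exists_lintegral_erpow_le (α := Rn n) a
  obtain ⟨K₂, hvol⟩ := hS.exists_volume_infDist_le hne
  refine ⟨K₁ * (K₂ * ((n - d + a)⁻¹.toNNReal * ((6 : ℝ) ^ (n + a)).toNNReal)),
    fun z R hR hR64 hz => ?_⟩
  have hbound : ∀ᵐ y ∂volume.restrict (closedBall z R),
      0 < infDist y S ∧ 0 ≤ infDist y S ∧ 2 * infDist y S ≤ 6 * R := by
    filter_upwards [ae_restrict_of_ae (hS.ae_infDist_pos hne hd),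
      self_mem_ae_restrict measurableSet_closedBall] with y hy hyz
    have := infDist_le_infDist_add_dist (s := S) (x := y) (y := z)
    exact ⟨hy, hy.le, by linarith [mem_closedBall.1 hyz]⟩
  have hstrip : ∀ τ ∈ Ioc 0 (6 * R),
      volume.restrict (closedBall z R) {y | infDist y S ≤ τ} ≤
        K₂ * (erpow τ (n - d) * erpow (6 * R) d) := fun τ hτ => by
    rw [Measure.restrict_apply (measurableSet_le measurable_infDist measurable_const), inter_comm]
    refine (measure_mono (inter_subset_inter_left _ ?_)).trans
      (hvol z (6 * R) τ hτ.1 hτ.2 (by linarith))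
    exact closedBall_subset_closedBall (by linarith)
  calc ∫⁻ y in closedBall z R, erpow (infDist y S) a
      ≤ K₁ * ∫⁻ τ in Ioc 0 (6 * R), erpow τ (a - 1) *
          volume.restrict (closedBall z R) {y | infDist y S ≤ τ} :=
        hlayer _ _ measurable_infDist _ _ hbound
    _ ≤ K₁ * ∫⁻ τ in Ioc 0 (6 * R), K₂ * erpow (6 * R) d * erpow τ (n - d + a - 1) := by
        refine mul_le_mul_right
          (setLIntegral_mono ((measurable_erpow _).const_mul _) fun τ hτ => ?_) _
        calc _ ≤ erpow τ (a - 1) * (K₂ * (erpow τ (n - d) * erpow (6 * R) d)) := by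
              gcongr
              exact hstrip τ hτ
          _ = _ := by rw [add_sub_assoc ((n : ℝ) - d), erpow_add hτ.1]; ring
    _ ≤ K₁ * (K₂ * erpow (6 * R) d * ((n - d + a)⁻¹.toNNReal * erpow (6 * R) (n - d + a))) := by
        rw [lintegral_const_mul _ (measurable_erpow _)]
        gcongr
        exact lintegral_Ioc_erpow_le (by linarith) (by linarith)
    _ = K₁ * (K₂ * ((n - d + a)⁻¹.toNNReal * erpow 6 (n + a))) * erpow R (n + a) := by
        have hexp : ∀ r : ℝ, 0 < r → erpow r (n + a) = erpow r d * erpow r (n - d + a) :=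
          fun r hr => by rw [← erpow_add hr]; congr 1; ring
        rw [hexp 6 (by norm_num), hexp R hR, mul_erpow (by norm_num) hR.le,
          mul_erpow (by norm_num) hR.le]
        ring
    _ = _ := by push_cast; rfl

lemma exists_volume_le_two_mul (hS : IsDSet S d C₀) (hne : S.Nonempty) (hd : d < n) :
    ∃ κ : ℝ, 0 < κ ∧ ∀ z : Rn n, ∀ R : ℝ, 0 < R → R ≤ 1 / 8 →
      volume (closedBall z R) ≤ 2 * volume (closedBall z R ∩ {y | κ * R < infDist y S}) := by
  obtain ⟨K, hK⟩ := hS.exists_volume_infDist_le hne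
  obtain ⟨κ, hκ0, hκ1, hκ⟩ := exists_mul_erpow_le_half (sub_pos.2 hd) K
  refine ⟨κ, hκ0, fun z R hR hR8 => ?_⟩
  set V := volume (closedBall z R) with hV
  have hVtop : V / 2 ≠ ⊤ := ENNReal.div_ne_top measure_closedBall_lt_top.ne two_ne_zero
  have hnear : volume (closedBall z R ∩ {y | infDist y S ≤ κ * R}) ≤ V / 2 := by
    calc _ ≤ K * (erpow (κ * R) (n - d) * erpow R d) :=
          hK z R (κ * R) (by positivity) (mul_le_of_le_one_left hR.le hκ1) hR8
      _ = K * erpow κ (n - d) * erpow R n := by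
          rw [mul_erpow hκ0.le hR.le, mul_assoc (erpow κ _), ← erpow_add hR, sub_add_cancel,
            mul_assoc]
      _ ≤ 2⁻¹ * erpow R n := by gcongr
      _ ≤ 2⁻¹ * V := by
          rw [hV, volume_closedBall_eq_erpow z hR]
          gcongr
          exact le_mul_of_one_le_left' (one_le_pow₀ one_le_two)
      _ = V / 2 := (ENNReal.div_eq_inv_mul).symm
  have hhalf : V / 2 ≤ volume (closedBall z R ∩ {y | κ * R < infDist y S}) := by
    refine (ENNReal.add_le_add_iff_left hVtop).1 ?_
    calc V / 2 + V / 2 = V := ENNReal.add_halves V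
      _ ≤ volume (closedBall z R ∩ {y | infDist y S ≤ κ * R}) +
          volume (closedBall z R ∩ {y | κ * R < infDist y S}) := by
          refine (measure_mono fun y hy => ?_).trans (measure_union_le _ _)
          exact (le_or_gt (infDist y S) (κ * R)).imp (⟨hy, ·⟩) (⟨hy, ·⟩)
      _ ≤ _ := by gcongr
  calc V = 2 * (V / 2) := (ENNReal.mul_div_cancel two_ne_zero ENNReal.ofNat_ne_top).symm
    _ ≤ _ := by gcongr

end IsDSet

section Averages

variable {n : ℕ}

/-- The normalized `L¹` mean of `|f|` over the cube `Q(x, r)`. -/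
def avgNorm (f : Rn n → ℝ) (x : Rn n) (r : ℝ) : ℝ≥0∞ :=
  ⨍⁻ y in closedBall x r, ‖f y‖ₑ ∂volume

/-- The normalized `L¹` distance on `Q(x, r)` from `f` to the polynomials of degree at most `N`. -/
def bestApprox (N : ℕ) (f : Rn n → ℝ) (x : Rn n) (r : ℝ) : ℝ≥0∞ :=
  ⨅ (P : MvPolynomial (Fin n) ℝ) (_ : P.totalDegree ≤ N),
    avgNorm (fun y => f y - MvPolynomial.eval y P) x r

variable {f : Rn n → ℝ} {x y : Rn n} {r t M : ℝ} {N : ℕ}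

lemma localApprox_succ_one (N : ℕ) (f : Rn n → ℝ) (x : Rn n) (r : ℝ) :
    localApprox (N + 1) 1 f x r = bestApprox N f x r := by
  simp only [localApprox, bestApprox, avgNorm, setLAverage_eq, Real.enorm_eq_ofReal_abs,
    add_tsub_cancel_right, ENNReal.rpow_one, one_div, inv_one, ENNReal.div_eq_inv_mul]

lemma avgNorm_eq (hr : 0 < r) (f : Rn n → ℝ) (x : Rn n) :
    avgNorm f x r = (2 ^ n * erpow r n)⁻¹ * ∫⁻ y in closedBall x r, ‖f y‖ₑ := by
  rw [avgNorm, setLAverage_eq, volume_closedBall_eq_erpow x hr, ENNReal.div_eq_inv_mul]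

lemma avgNorm_le_mul_avgNorm (hr : 0 < r) (ht : 0 < t) (hM : 0 ≤ M) (htM : t ≤ M * r)
    (hsub : closedBall x r ⊆ closedBall y t) (f : Rn n → ℝ) :
    avgNorm f x r ≤ erpow M n * avgNorm f y t := by
  have h2 : (2 : ℝ≥0∞) ^ n ≠ 0 := by positivity
  have hvol : (2 ^ n * erpow r n)⁻¹ ≤ erpow M n * (2 ^ n * erpow t n)⁻¹ := by
    rw [← div_eq_mul_inv, ENNReal.inv_le_iff_le_mul, mul_div_assoc', ENNReal.le_div_iff_mul_le,
      one_mul]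
    · calc 2 ^ n * erpow t n ≤ 2 ^ n * erpow (M * r) n := by
            gcongr
            exact erpow_le_erpow ht.le htM n.cast_nonneg
        _ = _ := by rw [mul_erpow hM hr.le]; ring
    · exact Or.inl (mul_ne_zero h2 (erpow_ne_zero ht _))
    · exact Or.inl (ENNReal.mul_ne_top (by finiteness) (erpow_ne_top _ _))
    · exact fun _ => mul_ne_zero h2 (erpow_ne_zero hr _)
    · exact fun h => absurd h (ENNReal.mul_ne_top (by finiteness) (erpow_ne_top _ _))
  rw [avgNorm_eq hr, avgNorm_eq ht, ← mul_assoc]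
  gcongr

lemma upperSemicontinuous_avgNorm (hf : LocallyIntegrable f) (hr : 0 < r) :
    UpperSemicontinuous fun y => avgNorm f y r := by
  let μ := (volume : Measure (Rn n)).withDensity fun y => ‖f y‖ₑ
  have hμ : ∀ x ρ, μ (closedBall x ρ) = ∫⁻ y in closedBall x ρ, ‖f y‖ₑ :=
    fun x ρ => withDensity_apply _ measurableSet_closedBall
  have hinv : (2 ^ n * erpow r n)⁻¹ ≠ ⊤ :=
    ENNReal.inv_ne_top.2 (mul_ne_zero (by positivity) (erpow_ne_zero hr _))
  intro y c hyc
  simp only [avgNorm_eq hr, ← hμ] at hyc ⊢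
  have hthick : Tendsto (fun ε => μ (cthickening ε (closedBall y r))) (𝓝 0)
      (𝓝 (μ (closedBall y r))) := by
    refine tendsto_measure_cthickening_of_isClosed ⟨1, one_pos, ?_⟩ isClosed_closedBall
    rw [cthickening_closedBall zero_le_one hr.le, hμ]
    exact (hf.integrableOn_isCompact (isCompact_closedBall _ _)).2.ne
  have hdist : Tendsto (fun z => dist z y) (𝓝 y) (𝓝 0) :=
    tendsto_iff_dist_tendsto_zero.1 tendsto_id
  have hevent := (ENNReal.Tendsto.const_mul hthick (Or.inr hinv)).eventually (gt_mem_nhds hyc)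
  filter_upwards [hdist.eventually hevent] with z hz
  refine lt_of_le_of_lt ?_ hz
  gcongr
  rw [cthickening_closedBall dist_nonneg hr.le]
  exact closedBall_subset_closedBall' (by linarith)

lemma locallyIntegrable_sub_eval (hf : LocallyIntegrable f) (P : MvPolynomial (Fin n) ℝ) :
    LocallyIntegrable fun y => f y - MvPolynomial.eval y P :=
  hf.sub (MvPolynomial.continuous_eval P).locallyIntegrable

lemma bestApprox_le_avgNorm (N : ℕ) (f : Rn n → ℝ) (x : Rn n) (r : ℝ) :
    bestApprox N f x r ≤ avgNorm f x r := by
  simpa [bestApprox] using iInf₂_le (f := fun P (_ : P.totalDegree ≤ N) =>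
    avgNorm (fun y => f y - MvPolynomial.eval y P) x r) 0 (by simp)

lemma le_mul_bestApprox {a c : ℝ≥0∞} (hc0 : c ≠ 0) (hc : c ≠ ⊤)
    (h : ∀ P : MvPolynomial (Fin n) ℝ, P.totalDegree ≤ N →
      a ≤ c * avgNorm (fun y => f y - MvPolynomial.eval y P) x r) :
    a ≤ c * bestApprox N f x r := by
  simp only [bestApprox, ENNReal.mul_iInf_of_ne hc0 hc]
  exact le_iInf₂ h

lemma bestApprox_le_mul_bestApprox (hr : 0 < r) (ht : 0 < t) (hM : 0 < M) (htM : t ≤ M * r)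
    (hsub : closedBall x r ⊆ closedBall y t) (N : ℕ) (f : Rn n → ℝ) :
    bestApprox N f x r ≤ erpow M n * bestApprox N f y t :=
  le_mul_bestApprox (erpow_ne_zero hM _) (erpow_ne_top _ _) fun P hP =>
    (iInf₂_le P hP).trans (avgNorm_le_mul_avgNorm hr ht hM.le htM hsub _)

lemma measurable_bestApprox (hf : LocallyIntegrable f) (hr : 0 < r) (N : ℕ) :
    Measurable fun y => bestApprox N f y r :=
  (upperSemicontinuous_biInf fun P _ =>
    upperSemicontinuous_avgNorm (locallyIntegrable_sub_eval hf P) hr).measurable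

end Averages

section SharpMaximal

variable {n N : ℕ} {s q : ℝ} {f : Rn n → ℝ}

/-- The dyadic sharp maximal function of smoothness `s`. Unlike `scaleIntegral`, which controls it,
it is evidently measurable. -/
def sharpMax (N : ℕ) (s : ℝ) (f : Rn n → ℝ) (y : Rn n) : ℝ≥0∞ :=
  ⨆ i : ℕ, erpow ((1 / 2) ^ (i + 1)) (-s) * bestApprox N f y ((1 / 2) ^ (i + 1))

/-- The `q`-th power of the local Triebel–Lizorkin functional
`(∫₀¹ (t⁻ˢ ℰ(f, Q(x, t)))^q dt/t)^{1/q}`. -/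
def scaleIntegral (N : ℕ) (s q : ℝ) (f : Rn n → ℝ) (x : Rn n) : ℝ≥0∞ :=
  ∫⁻ t in Ioo (0 : ℝ) 1, (erpow t (-s) * bestApprox N f x t) ^ q * erpow t (-1)

lemma measurable_sharpMax (hf : LocallyIntegrable f) (N : ℕ) (s : ℝ) :
    Measurable (sharpMax N s f) :=
  Measurable.iSup fun _ => (measurable_bestApprox hf (by positivity) N).const_mul _

lemma bestApprox_le_sharpMax (hs : 0 ≤ s) (N : ℕ) (f : Rn n → ℝ) {z y : Rn n} {r : ℝ} (hr : 0 < r)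
    (hr4 : r ≤ 1 / 4) (hy : y ∈ closedBall z r) :
    bestApprox N f z r ≤ erpow 4 n * erpow 4 s * (erpow r s * sharpMax N s f y) := by
  obtain ⟨i, hi1, hi2⟩ := exists_nat_pow_near_of_lt_one (x := 4 * r) (y := 1 / 2) (by positivity)
    (by linarith) (by norm_num) (by norm_num)
  set ρ : ℝ := (1 / 2) ^ (i + 1) with hρ
  have hρ0 : 0 < ρ := by positivity
  have hρ2 : 2 * r ≤ ρ := by rw [hρ, pow_succ]; linarith
  have hsub : closedBall z r ⊆ closedBall y ρ :=
    closedBall_subset_closedBall' (by linarith [mem_closedBall'.1 hy])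
  calc bestApprox N f z r ≤ erpow 4 n * bestApprox N f y ρ :=
        bestApprox_le_mul_bestApprox hr hρ0 (by norm_num) hi1.le hsub N f
    _ = erpow 4 n * (erpow ρ s * (erpow ρ (-s) * bestApprox N f y ρ)) := by
        rw [← mul_assoc (erpow ρ s), mul_comm (erpow ρ s), erpow_neg_mul_self hρ0, one_mul]
    _ ≤ erpow 4 n * (erpow (4 * r) s * sharpMax N s f y) := by
        gcongr
        · exact erpow_le_erpow hρ0.le hi1.le hs
        · exact le_iSup (fun i : ℕ => erpow ((1 / 2) ^ (i + 1)) (-s) *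
            bestApprox N f y ((1 / 2) ^ (i + 1))) i
    _ = _ := by rw [mul_erpow (by norm_num) hr.le]; ring

lemma exists_rpow_bestApprox_le_scaleIntegral (n N : ℕ) (s : ℝ) (hq : 0 < q) :
    ∃ K : ℝ≥0, ∀ (f : Rn n → ℝ) (y : Rn n) (r : ℝ), 0 < r → 2 * r ≤ 1 →
      (erpow r (-s) * bestApprox N f y r) ^ q ≤ K * scaleIntegral N s q f y := by
  obtain ⟨K₁, hK₁⟩ := exists_erpow_le_of_comparable (-s) one_pos two_pos
  obtain ⟨K₂, hK₂⟩ := exists_erpow_le_lintegral_Ioo 0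
  let K₃ : ℝ≥0 := K₁ * ((2 : ℝ) ^ (n : ℝ)).toNNReal
  refine ⟨K₂ * K₃ ^ q, fun f y r hr hr1 => ?_⟩
  let φ : ℝ → ℝ≥0∞ := fun t => erpow t (-s) * bestApprox N f y t
  have hφ : ∀ t ∈ Ioo r (2 * r), φ r ≤ K₃ * φ t := fun t ht => by
    calc φ r ≤ K₁ * erpow t (-s) * (erpow 2 n * bestApprox N f y t) :=
          mul_le_mul' (hK₁ r t hr (by linarith [ht.1]) ht.2.le)
            (bestApprox_le_mul_bestApprox hr (hr.trans ht.1) two_pos ht.2.le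
              (closedBall_subset_closedBall ht.1.le) N f)
      _ = K₁ * erpow 2 n * φ t := by ring
      _ = K₃ * φ t := by rw [ENNReal.coe_mul]; rfl
  calc φ r ^ q = erpow r 0 * φ r ^ q := by rw [erpow_zero, one_mul]
    _ ≤ K₂ * (∫⁻ t in Ioo r (2 * r), erpow t (0 - 1)) * φ r ^ q := by
        gcongr
        exact hK₂ r hr
    _ = K₂ * ∫⁻ t in Ioo r (2 * r), erpow t (0 - 1) * φ r ^ q := by
        rw [mul_assoc, lintegral_mul_const _ (measurable_erpow _)]
    _ ≤ K₂ * ∫⁻ t in Ioo r (2 * r), K₃ ^ q * (φ t ^ q * erpow t (-1)) := by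
        refine mul_le_mul_right (setLIntegral_mono' measurableSet_Ioo fun t ht => ?_) _
        rw [zero_sub, mul_comm, ← mul_assoc, ← ENNReal.mul_rpow_of_nonneg _ _ hq.le]
        gcongr
        exact hφ t ht
    _ = K₂ * K₃ ^ q * ∫⁻ t in Ioo r (2 * r), φ t ^ q * erpow t (-1) := by
        rw [lintegral_const_mul' _ _ (by finiteness), mul_assoc]
    _ ≤ K₂ * K₃ ^ q * scaleIntegral N s q f y := by
        gcongr
        exact lintegral_mono_set (Ioo_subset_Ioo hr.le hr1)
    _ = _ := by rw [ENNReal.coe_mul K₂, ENNReal.coe_rpow_of_nonneg K₃ hq.le]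

lemma exists_sharpMax_rpow_le (n N : ℕ) (s : ℝ) (hq : 0 < q) :
    ∃ K : ℝ≥0, ∀ (f : Rn n → ℝ) (y : Rn n),
      sharpMax N s f y ^ q ≤ K * scaleIntegral N s q f y := by
  obtain ⟨K, hK⟩ := exists_rpow_bestApprox_le_scaleIntegral n N s hq
  refine ⟨K, fun f y => ?_⟩
  rw [← ENNReal.le_rpow_inv_iff hq]
  refine iSup_le fun i => (ENNReal.le_rpow_inv_iff hq).2 (hK f y _ (by positivity) ?_)
  rw [pow_succ', ← mul_assoc, mul_one_div_cancel two_ne_zero, one_mul]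
  exact pow_le_one₀ (by norm_num) (by norm_num)

end SharpMaximal

section ExtrapolatedMeans

/-- The weight of the node `1 / (i + 1)` in the Lagrange extrapolation, to the point `0`, of a
polynomial of degree at most `N` from its values at `1, 1/2, …, 1/(N+1)`. -/
def extrapWeight (N i : ℕ) : ℝ :=
  (Lagrange.basis (Finset.range (N + 1)) (fun j : ℕ => ((j : ℝ) + 1)⁻¹) i).eval 0

lemma sum_extrapWeight_mul_eval {N : ℕ} {p : Polynomial ℝ} (hp : p.natDegree ≤ N) :
    ∑ i ∈ Finset.range (N + 1), extrapWeight N i * p.eval ((i : ℝ) + 1)⁻¹ = p.eval 0 := by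
  have hinj : Set.InjOn (fun j : ℕ => ((j : ℝ) + 1)⁻¹) (Finset.range (N + 1)) :=
    fun a _ b _ h => by simpa using h
  have hdeg : p.degree < (Finset.range (N + 1)).card := by
    rw [Finset.card_range]
    exact Polynomial.degree_le_natDegree.trans_lt (by exact_mod_cast Nat.lt_succ_of_le hp)
  conv_rhs => rw [Lagrange.eq_interpolate hinj hdeg, Lagrange.interpolate_apply,
    Polynomial.eval_finsetSum]
  exact Finset.sum_congr rfl fun i _ => by simp [extrapWeight, mul_comm]

variable {n N : ℕ} {f g : Rn n → ℝ} {z : Rn n} {r : ℝ} {P : MvPolynomial (Fin n) ℝ}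

lemma exists_polynomial_eval_eq_eval_line (P : MvPolynomial (Fin n) ℝ) (z v : Rn n) :
    ∃ p : Polynomial ℝ, p.natDegree ≤ P.totalDegree ∧
      ∀ t, p.eval t = MvPolynomial.eval (z + t • v) P := by
  refine ⟨MvPolynomial.aeval (fun i => Polynomial.C (z i) + Polynomial.C (v i) * Polynomial.X) P,
    ?_, fun t => ?_⟩
  · simpa using MvPolynomial.aeval_natDegree_le P le_rfl _ (n := 1) fun i => by compute_degree
  · induction P using MvPolynomial.induction_on with
    | C a => simp
    | add P Q hP hQ => simp [hP, hQ]
    | mul_X P i hP => simp [hP, mul_comm (v i) t]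

/-- The combination of the means of `f` over `Q(z, r / (i + 1))`, `i ≤ N`, that recovers the value
at `z` of every polynomial of degree at most `N`. -/
def extrapMean (N : ℕ) (f : Rn n → ℝ) (z : Rn n) (r : ℝ) : ℝ :=
  ∑ i ∈ Finset.range (N + 1), extrapWeight N i * ⨍ y in closedBall z (((i : ℝ) + 1)⁻¹ * r), f y

lemma setAverage_closedBall_eq (hr : 0 < r) (g : Rn n → ℝ) (z : Rn n) :
    ⨍ y in closedBall z r, g y = ⨍ y in closedBall (0 : Rn n) 1, g (z + r • y) := by
  have hscale := Measure.setIntegral_comp_smul_of_pos (volume : Measure (Rn n))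
    (fun x => g (z + x)) (closedBall (0 : Rn n) 1) hr
  have hshift := (measurePreserving_add_left (volume : Measure (Rn n)) z).setIntegral_preimage_emb
    (measurableEmbedding_addLeft z) g (closedBall z r)
  have hpre : (fun x => z + x) ⁻¹' closedBall z r = closedBall 0 r := by
    ext x
    simp
  rw [setAverage_eq, setAverage_eq, hscale, smul_unitClosedBall_of_nonneg hr.le, ← hpre, hshift,
    smul_smul]
  congr 1
  simp only [measureReal_def, Real.volume_pi_closedBall _ hr.le,
    Real.volume_pi_closedBall _ zero_le_one, Module.finrank_fin_fun, Fintype.card_fin]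
  rw [ENNReal.toReal_ofReal (by positivity), ENNReal.toReal_ofReal (by positivity), ← mul_inv,
    ← mul_pow]
  ring

lemma integrable_average_closedBall (hf : LocallyIntegrable f) (hr : 0 < r) (z : Rn n) :
    Integrable f
      (((volume.restrict (closedBall z r)) univ)⁻¹ • volume.restrict (closedBall z r)) :=
  (hf.integrableOn_isCompact (isCompact_closedBall z r)).smul_measure
    (ENNReal.inv_ne_top.2 (by simpa using (measure_closedBall_pos volume z hr).ne'))

lemma extrapMean_eval (hP : P.totalDegree ≤ N) (hr : 0 < r) (z : Rn n) :
    extrapMean N (fun y => MvPolynomial.eval y P) z r = MvPolynomial.eval z P := by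
  have hinteg : ∀ i : ℕ, Integrable
      (fun y : Rn n => extrapWeight N i * MvPolynomial.eval (z + (((i : ℝ) + 1)⁻¹ * r) • y) P)
      (((volume.restrict (closedBall (0 : Rn n) 1)) univ)⁻¹ •
        volume.restrict (closedBall (0 : Rn n) 1)) :=
    fun i => integrable_average_closedBall (Continuous.locallyIntegrable <|
      ((MvPolynomial.continuous_eval P).comp (by fun_prop : Continuous fun y : Rn n =>
        z + (((i : ℝ) + 1)⁻¹ * r) • y)).const_mul _) one_pos 0
  have hline : ∀ y : Rn n, ∑ i ∈ Finset.range (N + 1),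
      extrapWeight N i * MvPolynomial.eval (z + (((i : ℝ) + 1)⁻¹ * r) • y) P =
        MvPolynomial.eval z P := fun y => by
    obtain ⟨p, hp, hpe⟩ := exists_polynomial_eval_eq_eval_line P z (r • y)
    simpa [hpe, smul_smul] using sum_extrapWeight_mul_eval (hp.trans hP)
  calc extrapMean N (fun y => MvPolynomial.eval y P) z r
      = ∑ i ∈ Finset.range (N + 1), ⨍ y in closedBall (0 : Rn n) 1,
          extrapWeight N i * MvPolynomial.eval (z + (((i : ℝ) + 1)⁻¹ * r) • y) P :=
        Finset.sum_congr rfl fun i _ => by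
          rw [setAverage_closedBall_eq (by positivity)]
          exact (integral_const_mul _ _).symm
    _ = ⨍ _ in closedBall (0 : Rn n) 1, MvPolynomial.eval z P := by
        simp only [average]
        rw [← integral_finsetSum _ fun i _ => hinteg i]
        simp only [hline]
    _ = MvPolynomial.eval z P :=
        setAverage_const (measure_closedBall_pos volume _ one_pos).ne'
          measure_closedBall_lt_top.ne _

lemma extrapMean_sub (hf : LocallyIntegrable f) (hg : LocallyIntegrable g) (hr : 0 < r)
    (N : ℕ) (z : Rn n) :
    extrapMean N (fun y => f y - g y) z r = extrapMean N f z r - extrapMean N g z r := by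
  simp only [extrapMean]
  rw [← Finset.sum_sub_distrib]
  refine Finset.sum_congr rfl fun i _ => ?_
  rw [← mul_sub]
  congr 1
  exact integral_sub (integrable_average_closedBall hf (by positivity) z)
    (integrable_average_closedBall hg (by positivity) z)

lemma exists_enorm_extrapMean_le (n N : ℕ) :
    ∃ K : ℝ≥0, ∀ (f : Rn n → ℝ) (z : Rn n) (r : ℝ), 0 < r →
      ‖extrapMean N f z r‖ₑ ≤ K * avgNorm f z r := by
  refine ⟨∑ i ∈ Finset.range (N + 1), ‖extrapWeight N i‖₊ * (((i : ℝ) + 1) ^ (n : ℝ)).toNNReal,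
    fun f z r hr => (enorm_sum_le _ _).trans ?_⟩
  push_cast
  rw [Finset.sum_mul]
  refine Finset.sum_le_sum fun i _ => ?_
  have hi : (1 : ℝ) ≤ i + 1 := by linarith [i.cast_nonneg (α := ℝ)]
  rw [enorm_mul, mul_assoc]
  refine mul_le_mul_right ((enorm_integral_le_lintegral_enorm _).trans ?_) _
  refine avgNorm_le_mul_avgNorm (by positivity) hr (by positivity) ?_ ?_ f
  · rw [mul_inv_cancel_left₀ (by positivity)]
  · exact closedBall_subset_closedBall (mul_le_of_le_one_left hr.le (inv_le_one_of_one_le₀ hi))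

lemma exists_enorm_extrapMean_sub_eval_le (n N : ℕ) :
    ∃ K : ℝ≥0, ∀ f : Rn n → ℝ, LocallyIntegrable f → ∀ (z : Rn n) (r : ℝ), 0 < r →
      ∀ P : MvPolynomial (Fin n) ℝ, P.totalDegree ≤ N →
        ‖extrapMean N f z r - MvPolynomial.eval z P‖ₑ ≤
          K * avgNorm (fun y => f y - MvPolynomial.eval y P) z r := by
  obtain ⟨K, hK⟩ := exists_enorm_extrapMean_le n N
  refine ⟨K, fun f hf z r hr P hP => ?_⟩
  rw [← extrapMean_eval hP hr z,
    ← extrapMean_sub hf (MvPolynomial.continuous_eval P).locallyIntegrable hr]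
  exact hK _ z r hr

lemma exists_edist_extrapMean_le (n N : ℕ) :
    ∃ K : ℝ≥0, ∀ f : Rn n → ℝ, LocallyIntegrable f → ∀ (z : Rn n) (r : ℝ), 0 < r →
      edist (extrapMean N f z r) (extrapMean N f z (r / 2)) ≤ K * bestApprox N f z r := by
  obtain ⟨K, hK⟩ := exists_enorm_extrapMean_sub_eval_le n N
  let K₂ : ℝ≥0 := (K + 1) * (1 + ((2 : ℝ) ^ (n : ℝ)).toNNReal)
  have hK₂ : (K₂ : ℝ≥0∞) ≠ 0 := by simp [K₂]
  refine ⟨K₂, fun f hf z r hr => le_mul_bestApprox hK₂ ENNReal.coe_ne_top fun P hP => ?_⟩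
  let A := avgNorm (fun y => f y - MvPolynomial.eval y P) z r
  have hhalf : avgNorm (fun y => f y - MvPolynomial.eval y P) z (r / 2) ≤ erpow 2 n * A :=
    avgNorm_le_mul_avgNorm (by positivity) hr zero_le_two (by linarith)
      (closedBall_subset_closedBall (by linarith)) _
  calc edist (extrapMean N f z r) (extrapMean N f z (r / 2))
      ≤ edist (extrapMean N f z r) (MvPolynomial.eval z P) +
          edist (extrapMean N f z (r / 2)) (MvPolynomial.eval z P) := edist_triangle_right _ _ _
    _ ≤ K * A + K * (erpow 2 n * A) := by
        simp only [edist_eq_enorm_sub]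
        exact add_le_add (hK f hf z r hr P hP)
          ((hK f hf z _ (by positivity) P hP).trans (mul_le_mul_right hhalf _))
    _ = K * (1 + erpow 2 n) * A := by ring
    _ ≤ (K + 1) * (1 + erpow 2 n) * A := by gcongr; exact le_self_add
    _ = K₂ * A := by simp only [K₂, ENNReal.coe_mul, ENNReal.coe_add, ENNReal.coe_one]; rfl

lemma tendsto_extrapMean
    (h : Tendsto (fun r : ℝ => ⨍ y in closedBall z r, f y) (𝓝[>] 0) (𝓝 0)) (N : ℕ) :
    Tendsto (extrapMean N f z) (𝓝[>] 0) (𝓝 0) := by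
  have hterm : ∀ i : ℕ, Tendsto (fun r : ℝ => ((i : ℝ) + 1)⁻¹ * r) (𝓝[>] 0) (𝓝[>] 0) := fun i => by
    refine tendsto_nhdsWithin_iff.2 ⟨?_, ?_⟩
    · exact ((continuous_const_mul _).tendsto' 0 0 (mul_zero _)).mono_left nhdsWithin_le_nhds
    · filter_upwards [self_mem_nhdsWithin] with r (hr : 0 < r)
      exact mul_pos (by positivity) hr
  simpa [funext (extrapMean.eq_1 N f z)] using tendsto_finsetSum (Finset.range (N + 1)) fun i _ =>
    (h.comp (hterm i)).const_mul (extrapWeight N i)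

lemma exists_enorm_eval_le_tsum_bestApprox (n N : ℕ) :
    ∃ K : ℝ≥0, ∀ f : Rn n → ℝ, LocallyIntegrable f → ∀ z : Rn n,
      Tendsto (fun r : ℝ => ⨍ y in closedBall z r, f y) (𝓝[>] 0) (𝓝 0) →
      ∀ t, 0 < t → ∀ P : MvPolynomial (Fin n) ℝ, P.totalDegree ≤ N →
        ‖MvPolynomial.eval z P‖ₑ ≤ K * (avgNorm (fun y => f y - MvPolynomial.eval y P) z t +
          ∑' j : ℕ, bestApprox N f z ((1 / 2) ^ j * t)) := by
  obtain ⟨K₁, hK₁⟩ := exists_enorm_extrapMean_sub_eval_le n N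
  obtain ⟨K₂, hK₂⟩ := exists_edist_extrapMean_le n N
  refine ⟨K₁ + K₂, fun f hf z hz t ht P hP => ?_⟩
  have hscale : Tendsto (fun j : ℕ => (1 / 2 : ℝ) ^ j * t) atTop (𝓝[>] 0) := by
    refine tendsto_nhdsWithin_iff.2 ⟨?_, Eventually.of_forall fun j => mem_Ioi.2 (by positivity)⟩
    simpa using (tendsto_pow_atTop_nhds_zero_of_lt_one (r := (1 / 2 : ℝ))
      (by norm_num) (by norm_num)).mul_const t
  have htel : edist (extrapMean N f z t) 0 ≤
      ∑' j : ℕ, K₂ * bestApprox N f z ((1 / 2) ^ j * t) := by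
    have := edist_le_tsum_of_edist_le_of_tendsto₀
      (f := fun j : ℕ => extrapMean N f z ((1 / 2) ^ j * t))
      (fun j => K₂ * bestApprox N f z ((1 / 2) ^ j * t)) (fun j => ?_)
      ((tendsto_extrapMean hz N).comp hscale)
    · simpa using this
    · rw [show (1 / 2 : ℝ) ^ j.succ * t = (1 / 2) ^ j * t / 2 by rw [pow_succ]; ring]
      exact hK₂ f hf z _ (by positivity)
  calc ‖MvPolynomial.eval z P‖ₑ = edist (MvPolynomial.eval z P) 0 := (edist_zero_right _).symm
    _ ≤ edist (extrapMean N f z t) (MvPolynomial.eval z P) + edist (extrapMean N f z t) 0 :=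
        edist_triangle_left _ _ _
    _ ≤ K₁ * avgNorm (fun y => f y - MvPolynomial.eval y P) z t +
          K₂ * ∑' j : ℕ, bestApprox N f z ((1 / 2) ^ j * t) := by
        refine add_le_add ?_ (htel.trans_eq ENNReal.tsum_mul_left)
        rw [edist_eq_enorm_sub]
        exact hK₁ f hf z t ht P hP
    _ ≤ _ := by
        rw [mul_add, ENNReal.coe_add]
        gcongr
        exacts [le_self_add, le_add_self]

end ExtrapolatedMeans

section ScaleSums

lemma exists_tsum_erpow_le {η : ℝ} (hη : 0 < η) :
    ∃ K : ℝ≥0, ∑' j : ℕ, erpow ((1 / 2) ^ j) η ≤ K := by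
  have hpow : ∀ j : ℕ, erpow ((1 / 2) ^ j) η = erpow (1 / 2) η ^ j := fun j => by
    rw [erpow, erpow, ← ENNReal.ofReal_pow (by positivity), ← Real.rpow_natCast,
      ← Real.rpow_natCast, ← Real.rpow_mul (by norm_num), ← Real.rpow_mul (by norm_num), mul_comm]
  have hlt : erpow (1 / 2) η < 1 :=
    ENNReal.ofReal_lt_one.2 (Real.rpow_lt_one (by norm_num) (by norm_num) hη)
  have hfin : ∑' j : ℕ, erpow ((1 / 2) ^ j) η ≠ ⊤ := by
    simp only [hpow, ENNReal.tsum_geometric]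
    exact ENNReal.inv_ne_top.2 (tsub_pos_of_lt hlt).ne'
  exact ⟨_, (ENNReal.coe_toNNReal hfin).ge⟩

variable {n : ℕ} {d : ℝ} {K : ℝ≥0} {R t : ℝ} {μ : Measure (Rn n)} {W : Rn n → ℝ≥0∞}

lemma IsUpperRegular.setLIntegral_setLIntegral_closedBall_le [SFinite μ]
    (hμ : IsUpperRegular d K R μ) (hW : Measurable W) (w : Rn n) {ρ : ℝ} (hρ : 0 < ρ)
    (hρt : ρ ≤ t) (htR : t ≤ R) :
    ∫⁻ z in closedBall w t, ∫⁻ y in closedBall z ρ, W y ∂volume ∂μ ≤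
      K * erpow ρ d * ∫⁻ y in closedBall w (2 * t), W y := by
  let W' := (closedBall w (2 * t)).indicator W
  have hW' : Measurable W' := hW.indicator measurableSet_closedBall
  have hsub : ∀ z ∈ closedBall w t, closedBall z ρ ⊆ closedBall w (2 * t) := fun z hz =>
    closedBall_subset_closedBall' (by linarith [mem_closedBall.1 hz])
  calc ∫⁻ z in closedBall w t, ∫⁻ y in closedBall z ρ, W y ∂volume ∂μ
      = ∫⁻ z in closedBall w t, ∫⁻ y in closedBall z ρ, W' y ∂volume ∂μ :=
        setLIntegral_congr_fun measurableSet_closedBall fun z hz =>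
          setLIntegral_congr_fun measurableSet_closedBall fun y hy =>
            (indicator_of_mem (hsub z hz hy) W).symm
    _ ≤ ∫⁻ y, W' y * μ (closedBall y ρ) :=
        (setLIntegral_le_lintegral _ _).trans_eq (lintegral_setLIntegral_closedBall μ _ hW' ρ)
    _ ≤ ∫⁻ y, K * erpow ρ d * W' y := lintegral_mono fun y => by
        rw [mul_comm]
        gcongr
        exact hμ y ρ hρ (hρt.trans htR)
    _ = K * erpow ρ d * ∫⁻ y in closedBall w (2 * t), W y := by
        rw [lintegral_const_mul _ hW', lintegral_indicator measurableSet_closedBall]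

lemma exists_setLIntegral_tsum_le {a : ℝ} (K : ℝ≥0) (ha : 0 < a + d) :
    ∃ A : ℝ≥0, ∀ (μ : Measure (Rn n)) [SFinite μ] (R : ℝ), IsUpperRegular d K R μ →
      ∀ W : Rn n → ℝ≥0∞, Measurable W → ∀ (w : Rn n) (t : ℝ), 0 < t → t ≤ R →
      ∫⁻ z in closedBall w t, ∑' j : ℕ, erpow ((1 / 2) ^ j * t) a *
        ∫⁻ y in closedBall z ((1 / 2) ^ j * t), W y ∂volume ∂μ ≤
          A * (erpow t (a + d) * ∫⁻ y in closedBall w (2 * t), W y) := by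
  obtain ⟨G, hG⟩ := exists_tsum_erpow_le ha
  refine ⟨K * G, fun μ _ R hμ W hW w t ht htR => ?_⟩
  let I := ∫⁻ y in closedBall w (2 * t), W y
  have hmeas := fun r => measurable_setLIntegral_closedBall (ν := volume) (F := fun _ y => W y)
    (hW.comp measurable_snd) r
  have hscale : ∀ j : ℕ, ∫⁻ z in closedBall w t, erpow ((1 / 2) ^ j * t) a *
      ∫⁻ y in closedBall z ((1 / 2) ^ j * t), W y ∂volume ∂μ ≤
        K * (erpow t (a + d) * I) * erpow ((1 / 2) ^ j) (a + d) := fun j => by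
    have hj : (1 / 2 : ℝ) ^ j * t ≤ t :=
      mul_le_of_le_one_left ht.le (pow_le_one₀ (by norm_num) (by norm_num))
    rw [lintegral_const_mul _ (hmeas _)]
    calc _ ≤ erpow ((1 / 2) ^ j * t) a * (K * erpow ((1 / 2) ^ j * t) d * I) :=
          mul_le_mul_right
            (hμ.setLIntegral_setLIntegral_closedBall_le hW w (by positivity) hj htR) _
      _ = K * I * (erpow ((1 / 2) ^ j * t) a * erpow ((1 / 2) ^ j * t) d) := by ring
      _ = _ := by rw [← erpow_add (by positivity), mul_erpow (by positivity) ht.le]; ring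
  calc _ = ∑' j : ℕ, ∫⁻ z in closedBall w t, erpow ((1 / 2) ^ j * t) a *
        ∫⁻ y in closedBall z ((1 / 2) ^ j * t), W y ∂volume ∂μ :=
        lintegral_tsum fun j => ((hmeas _).const_mul _).aemeasurable
    _ ≤ ∑' j : ℕ, K * (erpow t (a + d) * I) * erpow ((1 / 2) ^ j) (a + d) :=
        ENNReal.tsum_le_tsum hscale
    _ ≤ K * (erpow t (a + d) * I) * G := by
        rw [ENNReal.tsum_mul_left]
        gcongr
    _ = _ := by rw [ENNReal.coe_mul]; ring

end ScaleSums

section NearBoundary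

variable {n : ℕ} {f g : Rn n → ℝ}

lemma avgNorm_le_avgNorm_sub_add {w : Rn n} {r : ℝ} {X : ℝ≥0∞} (hr : 0 < r) (f : Rn n → ℝ)
    (hg : ∀ y ∈ closedBall w r, ‖g y‖ₑ ≤ X) :
    avgNorm f w r ≤ avgNorm (fun y => f y - g y) w r + X := by
  have hvol : volume (closedBall w r) ≠ 0 := (measure_closedBall_pos volume w hr).ne'
  simp only [avgNorm, setLAverage_eq]
  calc (∫⁻ y in closedBall w r, ‖f y‖ₑ) / volume (closedBall w r)
      ≤ (∫⁻ y in closedBall w r, (‖f y - g y‖ₑ + X)) / volume (closedBall w r) := by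
        gcongr ?_ / _
        refine setLIntegral_mono' measurableSet_closedBall fun y hy => ?_
        calc ‖f y‖ₑ = ‖f y - g y + g y‖ₑ := by rw [sub_add_cancel]
          _ ≤ ‖f y - g y‖ₑ + ‖g y‖ₑ := enorm_add_le _ _
          _ ≤ ‖f y - g y‖ₑ + X := by gcongr; exact hg y hy
    _ = _ := by
        rw [lintegral_add_right _ measurable_const, setLIntegral_const, ENNReal.add_div,
          ENNReal.mul_div_cancel_right hvol measure_closedBall_lt_top.ne]

lemma measurable_sharpMax_mul_infDist (hf : LocallyIntegrable f) (N : ℕ) (s : ℝ) (S : Set (Rn n))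
    (σ : ℝ) : Measurable fun y => sharpMax N s f y * erpow (infDist y S) σ :=
  (measurable_sharpMax hf N s).mul ((measurable_erpow σ).comp measurable_infDist)

lemma exists_bestApprox_le_sharpMax_mul (N : ℕ) {s κ : ℝ} (hs : 0 ≤ s) (hκ : 0 < κ) (σ : ℝ) :
    ∃ K : ℝ≥0, ∀ (f : Rn n → ℝ) {S : Set (Rn n)} {z y : Rn n} {r : ℝ}, 0 < r → r ≤ 1 / 4 →
      z ∈ S → y ∈ closedBall z r → κ * r ≤ infDist y S →
      bestApprox N f z r ≤
        K * erpow r (s - σ) * (sharpMax N s f y * erpow (infDist y S) σ) := by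
  obtain ⟨K, hK⟩ := exists_erpow_le_of_comparable σ hκ one_pos
  refine ⟨((4 : ℝ) ^ (n : ℝ)).toNNReal * ((4 : ℝ) ^ s).toNNReal * K,
    fun f S z y r hr hr4 hz hy hyr => ?_⟩
  have hyS : infDist y S ≤ 1 * r := by
    rw [one_mul]
    exact (infDist_le_dist_of_mem hz).trans hy
  calc bestApprox N f z r ≤ erpow 4 n * erpow 4 s * (erpow r s * sharpMax N s f y) :=
        bestApprox_le_sharpMax hs N f hr hr4 hy
    _ = erpow 4 n * erpow 4 s * (erpow r (s - σ) * erpow r σ * sharpMax N s f y) := by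
        rw [← erpow_add hr, sub_add_cancel]
    _ ≤ erpow 4 n * erpow 4 s *
        (erpow r (s - σ) * (K * erpow (infDist y S) σ) * sharpMax N s f y) := by
        gcongr
        exact hK r _ hr hyr hyS
    _ = erpow 4 n * erpow 4 s * K * erpow r (s - σ) *
        (sharpMax N s f y * erpow (infDist y S) σ) := by ring
    _ = _ := by push_cast; rfl

namespace IsDSet

variable {S : Set (Rn n)} {d C₀ : ℝ}

lemma exists_bestApprox_le_setLIntegral (hS : IsDSet S d C₀) (hne : S.Nonempty) (hd : d < n)
    (N : ℕ) {s : ℝ} (hs : 0 ≤ s) (σ : ℝ) :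
    ∃ K : ℝ≥0, ∀ f : Rn n → ℝ, LocallyIntegrable f → ∀ z ∈ S, ∀ r : ℝ, 0 < r → r ≤ 1 / 8 →
      bestApprox N f z r ≤ K * (erpow r (s - σ - n) *
        ∫⁻ y in closedBall z r, sharpMax N s f y * erpow (infDist y S) σ) := by
  obtain ⟨κ, hκ0, hκ⟩ := hS.exists_volume_le_two_mul hne hd
  obtain ⟨K, hK⟩ := exists_bestApprox_le_sharpMax_mul (n := n) N hs hκ0 σ
  refine ⟨2 * K, fun f hf z hz r hr hr8 => ?_⟩
  let W : Rn n → ℝ≥0∞ := fun y => sharpMax N s f y * erpow (infDist y S) σ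
  let A := closedBall z r ∩ {y | κ * r < infDist y S}
  have hA : MeasurableSet A :=
    measurableSet_closedBall.inter (measurableSet_lt measurable_const measurable_infDist)
  have hpoint : ∀ y ∈ A, bestApprox N f z r ≤ K * erpow r (s - σ) * W y := fun y hy =>
    hK f hr (by linarith) hz hy.1 hy.2.le
  have hvol : bestApprox N f z r * (2 ^ n * erpow r n) ≤
      2 * (K * erpow r (s - σ) * ∫⁻ y in closedBall z r, W y) := by
    rw [← volume_closedBall_eq_erpow z hr]
    calc bestApprox N f z r * volume (closedBall z r)
        ≤ bestApprox N f z r * (2 * volume A) := by gcongr; exact hκ z r hr hr8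
      _ = 2 * ∫⁻ _ in A, bestApprox N f z r := by rw [setLIntegral_const]; ring
      _ ≤ 2 * ∫⁻ y in A, K * erpow r (s - σ) * W y :=
          mul_le_mul_right (setLIntegral_mono' hA hpoint) _
      _ ≤ 2 * (K * erpow r (s - σ) * ∫⁻ y in closedBall z r, W y) := by
          rw [lintegral_const_mul _ (measurable_sharpMax_mul_infDist hf N s S σ)]
          gcongr
          exact inter_subset_left
  calc bestApprox N f z r
      ≤ bestApprox N f z r * 2 ^ n := le_mul_of_one_le_right' (one_le_pow₀ one_le_two)
    _ = erpow r (-n) * erpow r n * (bestApprox N f z r * 2 ^ n) := by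
        rw [erpow_neg_mul_self hr, one_mul]
    _ = erpow r (-n) * (bestApprox N f z r * (2 ^ n * erpow r n)) := by ring
    _ ≤ erpow r (-n) * (2 * (K * erpow r (s - σ) * ∫⁻ y in closedBall z r, W y)) := by gcongr
    _ = 2 * K * ((erpow r (s - σ) * erpow r (-n)) * ∫⁻ y in closedBall z r, W y) := by ring
    _ = _ := by
        rw [← erpow_add hr, ← sub_eq_add_neg]
        push_cast
        rfl

lemma exists_setLIntegral_tsum_bestApprox_le (hS : IsDSet S d C₀) (hne : S.Nonempty) (hd : d < n)
    (N : ℕ) {s σ : ℝ} (hs : 0 ≤ s) (hσ : 0 < s - σ - n + d) :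
    ∃ K : ℝ≥0, ∀ f : Rn n → ℝ, LocallyIntegrable f → ∀ (w : Rn n) (t : ℝ), 0 < t → t ≤ 1 / 8 →
      ∫⁻ z in closedBall w t, ∑' j : ℕ, bestApprox N f z ((1 / 2) ^ j * t) ∂(μH[d]).restrict S ≤
        K * (erpow t (s - σ - n + d) *
          ∫⁻ y in closedBall w (2 * t), sharpMax N s f y * erpow (infDist y S) σ) := by
  obtain ⟨E, hE⟩ := hS.exists_bestApprox_le_setLIntegral hne hd N hs σ
  obtain ⟨U, hU⟩ := hS.exists_isUpperRegular
  have := hU.isLocallyFiniteMeasure (by norm_num)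
  obtain ⟨A, hA⟩ := exists_setLIntegral_tsum_le (n := n) U hσ
  refine ⟨E * A, fun f hf w t ht ht8 => ?_⟩
  have hscale : ∀ j : ℕ, (1 / 2 : ℝ) ^ j * t ≤ t := fun j =>
    mul_le_of_le_one_left ht.le (pow_le_one₀ (by norm_num) (by norm_num))
  calc _ ≤ ∫⁻ z in closedBall w t, E * ∑' j : ℕ, erpow ((1 / 2) ^ j * t) (s - σ - n) *
        ∫⁻ y in closedBall z ((1 / 2) ^ j * t), sharpMax N s f y * erpow (infDist y S) σ
          ∂volume ∂(μH[d]).restrict S := by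
        refine lintegral_mono_ae ?_
        filter_upwards [ae_restrict_of_ae (ae_restrict_mem hS.1.measurableSet)] with z hz
        rw [← ENNReal.tsum_mul_left]
        exact ENNReal.tsum_le_tsum fun j =>
          hE f hf z hz _ (by positivity) ((hscale j).trans ht8)
    _ ≤ _ := by
        rw [lintegral_const_mul' _ _ ENNReal.coe_ne_top, ENNReal.coe_mul, mul_assoc]
        gcongr
        exact hA _ _ hU _ (measurable_sharpMax_mul_infDist hf N s S σ) w t ht (by linarith)

lemma exists_setLIntegral_eval_le (hS : IsDSet S d C₀) (N : ℕ) :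
    ∃ K : ℝ≥0, ∀ f : Rn n → ℝ, LocallyIntegrable f → TraceZero S d f → ∀ (w : Rn n) (t : ℝ),
      0 < t → t ≤ 1 / 2 → ∀ P : MvPolynomial (Fin n) ℝ, P.totalDegree ≤ N →
      ∫⁻ z in closedBall w t ∩ S, ‖MvPolynomial.eval z P‖ₑ ∂μH[d] ≤
        K * (erpow t d * avgNorm (fun y => f y - MvPolynomial.eval y P) w (2 * t) +
          ∫⁻ z in closedBall w t, ∑' j : ℕ, bestApprox N f z ((1 / 2) ^ j * t)
            ∂(μH[d]).restrict S) := by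
  obtain ⟨B, hB⟩ := exists_enorm_eval_le_tsum_bestApprox n N
  obtain ⟨U, hU⟩ := hS.exists_isUpperRegular
  let c₂ : ℝ≥0 := ((2 : ℝ) ^ (n : ℝ)).toNNReal
  refine ⟨B * (c₂ * U + 1), fun f hf htr w t ht ht2 P hP => ?_⟩
  let a := avgNorm (fun y => f y - MvPolynomial.eval y P) w (2 * t)
  let T := ∫⁻ z in closedBall w t, ∑' j : ℕ, bestApprox N f z ((1 / 2) ^ j * t)
    ∂(μH[d]).restrict S
  rw [← Measure.restrict_restrict measurableSet_closedBall]
  calc _ ≤ ∫⁻ z in closedBall w t, B * (c₂ * a +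
          ∑' j : ℕ, bestApprox N f z ((1 / 2) ^ j * t)) ∂(μH[d]).restrict S := by
        refine lintegral_mono_ae ?_
        filter_upwards [ae_restrict_of_ae htr, ae_restrict_mem measurableSet_closedBall]
          with z hz hzw
        refine (hB f hf z hz t ht P hP).trans ?_
        gcongr
        exact avgNorm_le_mul_avgNorm ht (by positivity) zero_le_two le_rfl
          (closedBall_subset_closedBall' (by linarith [mem_closedBall.1 hzw])) _
    _ = B * (c₂ * a * (μH[d]).restrict S (closedBall w t) + T) := by
        rw [lintegral_const_mul' _ _ ENNReal.coe_ne_top, lintegral_add_left measurable_const,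
          setLIntegral_const]
    _ ≤ B * (c₂ * a * (U * erpow t d) + T) := by gcongr; exact hU w t ht ht2
    _ = B * (c₂ * U * (erpow t d * a) + 1 * T) := by ring
    _ ≤ B * ((c₂ * U + 1) * (erpow t d * a) + (c₂ * U + 1) * T) := by
        gcongr
        exacts [le_self_add, le_add_self]
    _ = _ := by
        push_cast
        ring

lemma exists_avgNorm_le_bestApprox_add (hS : IsDSet S d C₀) (hd0 : 0 < d) (hd1 : (n : ℝ) - 1 < d)
    (N : ℕ) :
    ∃ K : ℝ≥0, ∀ f : Rn n → ℝ, LocallyIntegrable f → TraceZero S d f → ∀ w ∈ S, ∀ t : ℝ,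
      0 < t → t ≤ 1 / 2 →
      avgNorm f w (2 * t) ≤ K * (bestApprox N f w (2 * t) + erpow t (-d) *
        ∫⁻ z in closedBall w t, ∑' j : ℕ, bestApprox N f z ((1 / 2) ^ j * t)
          ∂(μH[d]).restrict S) := by
  obtain ⟨A, hA⟩ := hS.exists_enorm_eval_le hd0 hd1 N
  obtain ⟨B, hB⟩ := hS.exists_setLIntegral_eval_le N
  refine ⟨1 + A * B, fun f hf htr w hw t ht ht2 => ?_⟩
  let T := ∫⁻ z in closedBall w t, ∑' j : ℕ, bestApprox N f z ((1 / 2) ^ j * t)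
    ∂(μH[d]).restrict S
  have hmain : avgNorm f w (2 * t) - A * B * (erpow t (-d) * T) ≤
      (1 + A * B) * bestApprox N f w (2 * t) := by
    refine le_mul_bestApprox (by simp) (by finiteness) fun P hP => tsub_le_iff_right.2 ?_
    let a := avgNorm (fun y => f y - MvPolynomial.eval y P) w (2 * t)
    refine (avgNorm_le_avgNorm_sub_add (by positivity) f (hA w hw t ht ht2 P hP)).trans ?_
    calc _ ≤ a + A * (erpow t (-d) * (B * (erpow t d * a + T))) := by
          gcongr
          exact hB f hf htr w t ht ht2 P hP
      _ = a + A * B * (erpow t (-d) * erpow t d * a) + A * B * (erpow t (-d) * T) := by ring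
      _ = (1 + A * B) * a + A * B * (erpow t (-d) * T) := by
          rw [erpow_neg_mul_self ht]
          ring
  calc avgNorm f w (2 * t) ≤ (1 + A * B) * bestApprox N f w (2 * t) +
        A * B * (erpow t (-d) * T) := tsub_le_iff_right.1 hmain
    _ ≤ _ := by
        rw [mul_add]
        push_cast
        gcongr
        exact le_add_self

theorem exists_avgNorm_le_setLIntegral (hS : IsDSet S d C₀) (hne : S.Nonempty) (hd0 : 0 < d)
    (hd1 : (n : ℝ) - 1 < d) (hd2 : d < n) (N : ℕ) {s σ : ℝ} (hs : 0 ≤ s)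
    (hσ : 0 < s - σ - n + d) :
    ∃ K : ℝ≥0, ∀ f : Rn n → ℝ, LocallyIntegrable f → TraceZero S d f → ∀ (x : Rn n) (t : ℝ),
      0 < t → t ≤ 1 / 16 → infDist x S ≤ t →
      avgNorm f x t ≤ K * (erpow t (s - σ - n) *
        ∫⁻ y in closedBall x (3 * t), sharpMax N s f y * erpow (infDist y S) σ) := by
  obtain ⟨E, hE⟩ := hS.exists_bestApprox_le_setLIntegral hne hd2 N hs σ
  obtain ⟨A, hA⟩ := hS.exists_setLIntegral_tsum_bestApprox_le hne hd2 N hs hσ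
  obtain ⟨T, hT⟩ := hS.exists_avgNorm_le_bestApprox_add hd0 hd1 N
  let c₂ : ℝ≥0 := ((2 : ℝ) ^ (n : ℝ)).toNNReal
  let c₃ : ℝ≥0 := ((2 : ℝ) ^ (s - σ - n)).toNNReal
  refine ⟨c₂ * T * (E * c₃ + A), fun f hf htr x t ht ht16 hx => ?_⟩
  obtain ⟨w, hw, hxw⟩ := hS.1.exists_infDist_eq_dist hne x
  rw [hxw] at hx
  let I := ∫⁻ y in closedBall w (2 * t), sharpMax N s f y * erpow (infDist y S) σ
  have hcenter : bestApprox N f w (2 * t) ≤ E * c₃ * (erpow t (s - σ - n) * I) := by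
    refine (hE f hf w hw (2 * t) (by positivity) (by linarith)).trans_eq ?_
    rw [mul_erpow zero_le_two ht.le, show erpow 2 (s - σ - n) = c₃ from rfl]
    ring
  have hsum : erpow t (-d) * (A * (erpow t (s - σ - n + d) * I)) =
      A * (erpow t (s - σ - n) * I) := by
    rw [mul_left_comm, ← mul_assoc (erpow t (-d)), ← erpow_add ht, neg_add_cancel_comm_assoc]
  calc avgNorm f x t ≤ c₂ * avgNorm f w (2 * t) :=
        avgNorm_le_mul_avgNorm ht (by positivity) zero_le_two le_rfl
          (closedBall_subset_closedBall' (by linarith)) f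
    _ ≤ c₂ * (T * (E * c₃ * (erpow t (s - σ - n) * I) + A * (erpow t (s - σ - n) * I))) := by
        grw [hT f hf htr w hw t ht (by linarith), hcenter, hA f hf w t ht (by linarith), hsum]
    _ = c₂ * T * (E * c₃ + A) * (erpow t (s - σ - n) * I) := by ring
    _ ≤ _ := by
        push_cast
        gcongr
        exact lintegral_mono_set (closedBall_subset_closedBall' (by linarith [dist_comm x w]))

end IsDSet

end NearBoundary

section BoundaryPotential

lemma exists_lintegral_erpow_le_of_growth {α : Type*} [MeasurableSpace α] (m : ℝ) {b : ℝ}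
    (hb : 0 < b) :
    ∃ K : ℝ≥0, ∀ (μ : Measure α) [SFinite μ] (ρ : α → ℝ), Measurable ρ →
      ∀ (M : ℝ≥0∞) (l R : ℝ), 0 < l → (∀ᵐ x ∂μ, l ≤ ρ x ∧ 2 * ρ x ≤ R) →
      (∀ τ ∈ Ioc l R, μ {x | ρ x ≤ τ} ≤ M * erpow τ m) →
      ∫⁻ x, erpow (ρ x) (-(m + b)) ∂μ ≤ K * (M * erpow l (-b)) := by
  obtain ⟨K, hK⟩ := exists_lintegral_erpow_le (α := α) (-(m + b))
  refine ⟨K * b⁻¹.toNNReal, fun μ _ ρ hρ M l R hl hrange hgrowth => ?_⟩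
  calc ∫⁻ x, erpow (ρ x) (-(m + b)) ∂μ
      ≤ K * ∫⁻ τ in Ioc l R, erpow τ (-(m + b) - 1) * μ {x | ρ x ≤ τ} :=
        hK μ ρ hρ l R (hrange.mono fun x hx => ⟨hl.trans_le hx.1, hx⟩)
    _ ≤ K * ∫⁻ τ in Ioc l R, M * erpow τ (-b - 1) := by
        refine mul_le_mul_right (setLIntegral_mono' measurableSet_Ioc fun τ hτ => ?_) _
        refine (mul_le_mul_right (hgrowth τ hτ) _).trans_eq ?_
        rw [show -b - 1 = -(m + b) - 1 + m by ring, erpow_add (hl.trans hτ.1), mul_left_comm]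
    _ ≤ K * (M * (b⁻¹.toNNReal * erpow l (-b))) := by
        rw [lintegral_const_mul _ (measurable_erpow _)]
        grw [Ioc_subset_Ioi_self, lintegral_Ioi_erpow_le hb hl]
    _ = _ := by
        push_cast
        ring

lemma rpow_lintegral_mul_le {α : Type*} [MeasurableSpace α] {μ : Measure α} {p p' : ℝ}
    (hpp : p.HolderConjugate p') {u v : α → ℝ≥0∞} (hu : AEMeasurable u μ)
    (hv : AEMeasurable v μ) :
    (∫⁻ a, u a * v a ∂μ) ^ p ≤ (∫⁻ a, u a ^ p ∂μ) * (∫⁻ a, v a ^ p' ∂μ) ^ (p / p') := by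
  refine (ENNReal.rpow_le_rpow (ENNReal.lintegral_mul_le_Lp_mul_Lq μ hpp hu hv)
    hpp.nonneg).trans_eq ?_
  rw [ENNReal.mul_rpow_of_nonneg _ _ hpp.nonneg, ← ENNReal.rpow_mul, ← ENNReal.rpow_mul,
    one_div_mul_cancel hpp.ne_zero, ENNReal.rpow_one, one_div_mul_eq_div]

variable {n : ℕ}

namespace IsDSet

variable {S : Set (Rn n)} {d C₀ : ℝ}

theorem exists_rpow_setLIntegral_mul_infDist_le (hS : IsDSet S d C₀) (hne : S.Nonempty)
    (hd : d < n) {σ b p p' : ℝ} (hpp : p.HolderConjugate p')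
    (hσ : -((σ - b / p) * p') < n - d) :
    ∃ K : ℝ≥0, ∀ G : Rn n → ℝ≥0∞, Measurable G → ∀ x : Rn n, ∀ r : ℝ, 0 < r → r ≤ 1 / 64 →
      infDist x S ≤ 2 * r →
      (∫⁻ y in closedBall x r, G y * erpow (infDist y S) σ) ^ p ≤
        K * (erpow r (n * (p - 1) + σ * p - b) *
          ∫⁻ y in closedBall x r, G y ^ p * erpow (infDist y S) b) := by
  obtain ⟨K, hK⟩ := hS.exists_setLIntegral_infDist_le hne hd (neg_lt.1 hσ)
  refine ⟨K ^ (p / p'), fun G hG x r hr hr64 hx => ?_⟩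
  have hpos : ∀ᵐ y ∂volume.restrict (closedBall x r), 0 < infDist y S :=
    ae_restrict_of_ae (hS.ae_infDist_pos hne hd)
  let u := fun y => G y * erpow (infDist y S) (b / p)
  let v := fun y => erpow (infDist y S) (σ - b / p)
  have hu : ∫⁻ y in closedBall x r, u y ^ p =
      ∫⁻ y in closedBall x r, G y ^ p * erpow (infDist y S) b :=
    lintegral_congr_ae <| by
      filter_upwards [hpos] with y hy
      rw [ENNReal.mul_rpow_of_nonneg _ _ hpp.nonneg, erpow_rpow hy, div_mul_cancel₀ _ hpp.ne_zero]
  have hv : ∫⁻ y in closedBall x r, v y ^ p' ≤ K * erpow r (n + (σ - b / p) * p') := by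
    refine (lintegral_congr_ae ?_).trans_le (hK x r hr hr64 hx)
    filter_upwards [hpos] with y hy
    exact erpow_rpow hy _ _
  have hexp : (n + (σ - b / p) * p') * (p / p') = n * (p - 1) + σ * p - b := by
    have hdiv : p / p' = p - 1 := hpp.div_conj_eq_sub_one
    rw [add_mul, hdiv, ← hdiv, mul_assoc, mul_div_cancel₀ _ hpp.symm.ne_zero, sub_mul,
      div_mul_cancel₀ _ hpp.ne_zero, hdiv]
    ring
  calc (∫⁻ y in closedBall x r, G y * erpow (infDist y S) σ) ^ p
      = (∫⁻ y in closedBall x r, u y * v y) ^ p := by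
        congr 1
        refine lintegral_congr_ae ?_
        filter_upwards [hpos] with y hy
        rw [mul_assoc, ← erpow_add hy, add_sub_cancel]
    _ ≤ (∫⁻ y in closedBall x r, u y ^ p) * (∫⁻ y in closedBall x r, v y ^ p') ^ (p / p') :=
        rpow_lintegral_mul_le hpp (by fun_prop) (by fun_prop)
    _ ≤ (∫⁻ y in closedBall x r, G y ^ p * erpow (infDist y S) b) *
          (K * erpow r (n + (σ - b / p) * p')) ^ (p / p') := by
        rw [hu]
        have := hpp.nonneg
        have := hpp.symm.nonneg
        gcongr
    _ = _ := by
        rw [ENNReal.mul_rpow_of_nonneg _ _ (div_nonneg hpp.nonneg hpp.symm.nonneg), erpow_rpow hr,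
          hexp, ENNReal.coe_rpow_of_nonneg _ (div_nonneg hpp.nonneg hpp.symm.nonneg)]
        ring

theorem exists_rpow_avgNorm_le_setLIntegral (hS : IsDSet S d C₀) (hne : S.Nonempty) (hd0 : 0 < d)
    (hd1 : (n : ℝ) - 1 < d) (hd2 : d < n) (N : ℕ) {s σ b p p' : ℝ} (hs : 0 ≤ s)
    (hσ : 0 < s - σ - n + d) (hpp : p.HolderConjugate p')
    (hσb : -((σ - b / p) * p') < n - d) :
    ∃ K : ℝ≥0, ∀ f : Rn n → ℝ, LocallyIntegrable f → TraceZero S d f → ∀ (x : Rn n) (t : ℝ),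
      0 < t → t ≤ 1 / 192 → infDist x S ≤ t →
      (erpow t (-s) * avgNorm f x t) ^ p ≤ K * (erpow t (-n - b) *
        ∫⁻ y in closedBall x (3 * t), sharpMax N s f y ^ p * erpow (infDist y S) b) := by
  obtain ⟨A, hA⟩ := hS.exists_avgNorm_le_setLIntegral hne hd0 hd1 hd2 N hs hσ
  obtain ⟨B, hB⟩ := hS.exists_rpow_setLIntegral_mul_infDist_le hne hd2 hpp hσb
  let e := n * (p - 1) + σ * p - b
  refine ⟨A ^ p * B * ((3 : ℝ) ^ e).toNNReal, fun f hf htr x t ht ht' hx => ?_⟩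
  let J := ∫⁻ y in closedBall x (3 * t), sharpMax N s f y ^ p * erpow (infDist y S) b
  have hpow : erpow t (-σ - n) ^ p * erpow t e = erpow t (-n - b) := by
    rw [erpow_rpow ht, ← erpow_add ht]
    congr 1
    ring
  calc (erpow t (-s) * avgNorm f x t) ^ p
      ≤ (erpow t (-s) * (A * (erpow t (s - σ - n) * ∫⁻ y in closedBall x (3 * t),
          sharpMax N s f y * erpow (infDist y S) σ))) ^ p := by
        have := hpp.nonneg
        gcongr
        exact hA f hf htr x t ht (by linarith) hx
    _ = A ^ p * erpow t (-σ - n) ^ p * (∫⁻ y in closedBall x (3 * t),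
          sharpMax N s f y * erpow (infDist y S) σ) ^ p := by
        simp only [← ENNReal.mul_rpow_of_nonneg _ _ hpp.nonneg]
        rw [mul_left_comm, ← mul_assoc (erpow t (-s)), ← erpow_add ht, mul_assoc (A : ℝ≥0∞)]
        congr 4
        ring
    _ ≤ A ^ p * erpow t (-σ - n) ^ p * (B * (erpow (3 * t) e * J)) := by
        gcongr
        exact hB _ (measurable_sharpMax hf N s) x (3 * t) (by positivity) (by linarith)
          (by linarith)
    _ = A ^ p * B * erpow 3 e * ((erpow t (-σ - n) ^ p * erpow t e) * J) := by
        rw [mul_erpow (by norm_num) ht.le]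
        ring
    _ = _ := by
        rw [hpow]
        push_cast [ENNReal.coe_rpow_of_nonneg _ hpp.nonneg]
        rfl

end IsDSet

/-- The potential `∫ (max (δ x) (|x - y| / 3)) ^ (-e) Z y dy` over `|x - y| ≤ 1/128`, with `δ` the
distance to `S`. It dominates the averages `t ^ (-e) ∫_{Q(x, 3t)} Z` for `δ x ≤ t ≤ 1/384`. -/
def boundaryPotential (S : Set (Rn n)) (e : ℝ) (Z : Rn n → ℝ≥0∞) (x : Rn n) : ℝ≥0∞ :=
  ∫⁻ y in closedBall x (1 / 128), erpow (max (infDist x S) (dist x y / 3)) (-e) * Z y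

lemma erpow_mul_setLIntegral_le_boundaryPotential {S : Set (Rn n)} {e : ℝ} (he : 0 ≤ e)
    (Z : Rn n → ℝ≥0∞) {x : Rn n} (hx : 0 < infDist x S) {t : ℝ} (hxt : infDist x S ≤ t)
    (ht : t ≤ 1 / 384) :
    erpow t (-e) * ∫⁻ y in closedBall x (3 * t), Z y ≤ boundaryPotential S e Z x := by
  rw [boundaryPotential, ← lintegral_const_mul' _ _ (erpow_ne_top t (-e))]
  refine (setLIntegral_mono' measurableSet_closedBall fun y hy => ?_).trans
    (lintegral_mono_set (closedBall_subset_closedBall (by linarith)))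
  gcongr
  refine erpow_le_erpow_of_nonpos (lt_max_of_lt_left hx) (max_le hxt ?_) (by linarith)
  linarith [mem_closedBall'.1 hy]

lemma measurable_boundaryPotential_kernel (S : Set (Rn n)) (a : ℝ) :
    Measurable (Function.uncurry fun x y : Rn n => erpow (max (infDist x S) (dist x y / 3)) a) :=
  (measurable_erpow a).comp ((measurable_infDist.comp measurable_fst).max
    (measurable_dist.div_const 3))

lemma measurable_boundaryPotential (S : Set (Rn n)) (e : ℝ) {Z : Rn n → ℝ≥0∞}
    (hZ : Measurable Z) : Measurable (boundaryPotential S e Z) :=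
  measurable_setLIntegral_closedBall
    ((measurable_boundaryPotential_kernel S (-e)).mul (hZ.comp measurable_snd)) _

namespace IsDSet

variable {S : Set (Rn n)} {d C₀ : ℝ}

lemma exists_setLIntegral_kernel_le (hS : IsDSet S d C₀) (hne : S.Nonempty) (hd : d < n)
    {b ε : ℝ} (hb : 0 < b) (hε : ε < n - d) :
    ∃ K : ℝ≥0, ∀ y : Rn n, 0 < infDist y S →
      ∫⁻ x in closedBall y (1 / 128) ∩ {x | infDist x S ≤ 1 / 384}, erpow (infDist x S) (-ε) *
        erpow (max (infDist x S) (dist x y / 3)) (-(n - ε + b)) ≤ K * erpow (infDist y S) (-b) := by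
  obtain ⟨A, hA⟩ := exists_lintegral_erpow_le_of_growth (α := Rn n) (n - ε) hb
  obtain ⟨B, hB⟩ := hS.exists_setLIntegral_infDist_le hne hd (neg_lt_neg hε)
  rw [← sub_eq_add_neg] at hB
  refine ⟨A * (B * ((3 : ℝ) ^ (n - ε)).toNNReal * ((1 / 4 : ℝ) ^ (-b)).toNNReal), fun y hy => ?_⟩
  let D := closedBall y (1 / 128) ∩ {x | infDist x S ≤ 1 / 384}
  have hD : MeasurableSet D :=
    measurableSet_closedBall.inter (measurableSet_le measurable_infDist measurable_const)
  let ρ : Rn n → ℝ := fun x => max (infDist x S) (dist x y / 3)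
  have hρ : Measurable ρ := by fun_prop
  have hδρ : ∀ x, infDist x S ≤ ρ x ∧ dist x y ≤ 3 * ρ x := fun x =>
    ⟨le_max_left _ _, by linarith [le_max_right (infDist x S) (dist x y / 3)]⟩
  let μ := (volume.restrict D).withDensity fun x => erpow (infDist x S) (-ε)
  have hrange : ∀ᵐ x ∂μ, 1 / 4 * infDist y S ≤ ρ x ∧ 2 * ρ x ≤ 1 / 192 := by
    refine (withDensity_absolutelyContinuous _ _).ae_le ?_
    filter_upwards [ae_restrict_mem hD] with x hx
    have hle : ρ x ≤ 1 / 384 := max_le hx.2 (by linarith [mem_closedBall.1 hx.1])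
    have := infDist_le_infDist_add_dist (s := S) (x := y) (y := x)
    rw [dist_comm] at this
    exact ⟨by linarith [hδρ x], by linarith⟩
  have hgrowth : ∀ τ ∈ Ioc (1 / 4 * infDist y S) (1 / 192), μ {x | ρ x ≤ τ} ≤
      B * erpow 3 (n - ε) * erpow τ (n - ε) := fun τ ⟨hτ, hτ'⟩ => by
    have hτ0 : 0 < τ := by linarith
    rw [withDensity_apply _ (measurableSet_le hρ measurable_const),
      Measure.restrict_restrict (measurableSet_le hρ measurable_const), mul_assoc,
      ← mul_erpow (by norm_num) hτ0.le]
    refine (lintegral_mono_set fun x hx => mem_closedBall.2 ?_).trans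
      (hB y (3 * τ) (by positivity) (by linarith) (by linarith))
    linarith [hδρ x, mem_ofPred_eq ▸ hx.1]
  calc ∫⁻ x in D, erpow (infDist x S) (-ε) * erpow (ρ x) (-(n - ε + b))
      = ∫⁻ x, erpow (ρ x) (-(n - ε + b)) ∂μ :=
        (lintegral_withDensity_eq_lintegral_mul _ (by fun_prop) (by fun_prop)).symm
    _ ≤ A * (B * erpow 3 (n - ε) * erpow (1 / 4 * infDist y S) (-b)) :=
        hA μ ρ hρ _ (1 / 4 * infDist y S) _ (by positivity) hrange hgrowth
    _ = _ := by
        rw [mul_erpow (by norm_num) hy.le]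
        push_cast
        simp only [erpow, ENNReal.ofReal]
        ring

theorem exists_setLIntegral_boundaryPotential_le (hS : IsDSet S d C₀) (hne : S.Nonempty)
    (hd : d < n) {b ε : ℝ} (hb : 0 < b) (hε : ε < n - d) :
    ∃ K : ℝ≥0, ∀ G : Rn n → ℝ≥0∞, Measurable G →
      ∫⁻ x in {x | infDist x S ≤ 1 / 384}, erpow (infDist x S) (-ε) *
        boundaryPotential S (n - ε + b) (fun y => G y * erpow (infDist y S) b) x ≤
      K * ∫⁻ y, G y := by
  obtain ⟨K, hK⟩ := hS.exists_setLIntegral_kernel_le hne hd hb hε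
  refine ⟨K, fun G hG => ?_⟩
  let D := {x : Rn n | infDist x S ≤ 1 / 384}
  let k : Rn n → Rn n → ℝ≥0∞ := fun x y =>
    erpow (infDist x S) (-ε) * erpow (max (infDist x S) (dist x y / 3)) (-(n - ε + b))
  have hk : Measurable (Function.uncurry k) :=
    ((measurable_erpow _).comp (measurable_infDist.comp measurable_fst)).mul
      (measurable_boundaryPotential_kernel S _)
  let w : Rn n → ℝ≥0∞ := fun y => G y * erpow (infDist y S) b
  have hw : Measurable w := by fun_prop
  have hkernel : ∀ᵐ y, ∫⁻ x in closedBall y (1 / 128) ∩ D, k x y * w y ≤ K * G y := by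
    filter_upwards [hS.ae_infDist_pos hne hd] with y hy
    calc ∫⁻ x in closedBall y (1 / 128) ∩ D, k x y * w y
        = (∫⁻ x in closedBall y (1 / 128) ∩ D, k x y) * w y :=
          lintegral_mul_const _ hk.of_uncurry_right
      _ ≤ K * erpow (infDist y S) (-b) * w y := mul_le_mul_left (hK y hy) _
      _ = K * (erpow (infDist y S) (-b) * erpow (infDist y S) b) * G y := by
          simp only [w]
          ring
      _ = K * G y := by rw [erpow_neg_mul_self hy, mul_one]
  calc ∫⁻ x in D, erpow (infDist x S) (-ε) * boundaryPotential S (n - ε + b) w x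
      = ∫⁻ x in D, ∫⁻ y in closedBall x (1 / 128), k x y * w y ∂volume := by
        refine lintegral_congr fun x => ?_
        simp only [boundaryPotential, k, mul_assoc, ← lintegral_const_mul' _ _ (erpow_ne_top _ _)]
    _ = ∫⁻ y, ∫⁻ x in closedBall y (1 / 128), k x y * w y ∂volume.restrict D :=
        lintegral_setLIntegral_closedBall_swap _ _ (hk.mul (hw.comp measurable_snd)) _
    _ ≤ ∫⁻ y, K * G y := by
        simp only [Measure.restrict_restrict measurableSet_closedBall]
        exact lintegral_mono_ae hkernel
    _ = K * ∫⁻ y, G y := lintegral_const_mul _ hG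

end IsDSet

end BoundaryPotential

section ScaleRegimes

lemma add_add_rpow_le (a b c : ℝ≥0∞) {r : ℝ} (hr : 0 ≤ r) :
    (a + b + c) ^ r ≤ 3 ^ r * (a ^ r + b ^ r + c ^ r) := by
  have hmax : (max (max a b) c) ^ r ≤ a ^ r + b ^ r + c ^ r := by
    simp only [(ENNReal.monotone_rpow_of_nonneg hr).map_max]
    exact max_le (max_le (le_add_right le_self_add) (le_add_right le_add_self)) le_add_self
  calc (a + b + c) ^ r ≤ (3 * max (max a b) c) ^ r := by
        gcongr
        calc a + b + c ≤ max (max a b) c + max (max a b) c + max (max a b) c := by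
              gcongr
              · exact le_max_of_le_left (le_max_left a b)
              · exact le_max_of_le_left (le_max_right a b)
              · exact le_max_right _ c
          _ = 3 * max (max a b) c := by ring
    _ = 3 ^ r * max (max a b) c ^ r := ENNReal.mul_rpow_of_nonneg _ _ hr
    _ ≤ _ := by gcongr

lemma exists_setLIntegral_Icc_rpow_le {p q ε : ℝ} (hp : 0 < p) (hq : 0 < q) (hε : 0 < ε) :
    ∃ K : ℝ≥0, ∀ (φ : ℝ → ℝ≥0∞) (M : ℝ≥0∞) (δ R : ℝ), 0 < δ →
      (∀ t ∈ Icc δ R, φ t ^ p ≤ M * erpow t (-ε)) →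
      (∫⁻ t in Icc δ R, φ t ^ q * erpow t (-1)) ^ (p / q) ≤ K * (M * erpow δ (-ε)) := by
  let e := ε * (q / p)
  have he : 0 < e := by positivity
  refine ⟨e⁻¹.toNNReal ^ (p / q), fun φ M δ R hδ hφ => ?_⟩
  have hqp : q / p * (p / q) = 1 := by field_simp
  have hφq : ∀ t ∈ Icc δ R, φ t ^ q ≤ M ^ (q / p) * erpow t (-e) := fun t ht => by
    have ht0 : 0 < t := hδ.trans_le ht.1
    calc φ t ^ q = (φ t ^ p) ^ (q / p) := by rw [← ENNReal.rpow_mul, mul_div_cancel₀ _ hp.ne']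
      _ ≤ (M * erpow t (-ε)) ^ (q / p) := by
          gcongr
          exact hφ t ht
      _ = _ := by
          rw [ENNReal.mul_rpow_of_nonneg _ _ (by positivity), erpow_rpow ht0, neg_mul]
  have hinteg : ∫⁻ t in Icc δ R, φ t ^ q * erpow t (-1) ≤
      M ^ (q / p) * (e⁻¹.toNNReal * erpow δ (-e)) := by
    calc ∫⁻ t in Icc δ R, φ t ^ q * erpow t (-1)
        ≤ ∫⁻ t in Icc δ R, M ^ (q / p) * erpow t (-e - 1) := by
          refine setLIntegral_mono' measurableSet_Icc fun t ht => ?_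
          rw [sub_eq_add_neg, erpow_add (hδ.trans_le ht.1), ← mul_assoc]
          gcongr
          exact hφq t ht
      _ = M ^ (q / p) * ∫⁻ t in Ioc δ R, erpow t (-e - 1) := by
          rw [lintegral_const_mul _ (measurable_erpow _), setLIntegral_congr Ioc_ae_eq_Icc]
      _ ≤ _ := by grw [Ioc_subset_Ioi_self, lintegral_Ioi_erpow_le he hδ]
  calc (∫⁻ t in Icc δ R, φ t ^ q * erpow t (-1)) ^ (p / q)
      ≤ (M ^ (q / p) * (e⁻¹.toNNReal * erpow δ (-e))) ^ (p / q) := by gcongr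
    _ = M * (e⁻¹.toNNReal ^ (p / q) * erpow δ (-ε)) := by
        rw [ENNReal.mul_rpow_of_nonneg _ _ (by positivity), ← ENNReal.rpow_mul, hqp,
          ENNReal.rpow_one, ENNReal.mul_rpow_of_nonneg _ _ (by positivity), erpow_rpow hδ,
          neg_mul, mul_assoc, hqp, mul_one]
    _ = _ := by
        rw [ENNReal.coe_rpow_of_nonneg _ (by positivity), mul_left_comm]

variable {n : ℕ}

lemma exists_setLIntegral_Ioo_avgNorm_rpow_le (n : ℕ) {s q R : ℝ} (hs : 0 ≤ s) (hq : 0 < q)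
    (hR : 0 < R) :
    ∃ K : ℝ≥0, ∀ (f : Rn n → ℝ) (x : Rn n),
      ∫⁻ t in Ioo R 1, (erpow t (-s) * avgNorm f x t) ^ q * erpow t (-1) ≤
        K * avgNorm f x 1 ^ q := by
  let c : ℝ≥0∞ := (erpow R (-s) * erpow R⁻¹ n) ^ q * erpow R (-1) * volume (Ioo R 1)
  have hc : c ≠ ⊤ := ENNReal.mul_ne_top (ENNReal.mul_ne_top (ENNReal.rpow_ne_top_of_nonneg hq.le
    (ENNReal.mul_ne_top (erpow_ne_top _ _) (erpow_ne_top _ _))) (erpow_ne_top _ _)) (by simp)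
  refine ⟨c.toNNReal, fun f x => ?_⟩
  rw [ENNReal.coe_toNNReal hc]
  calc ∫⁻ t in Ioo R 1, (erpow t (-s) * avgNorm f x t) ^ q * erpow t (-1)
      ≤ ∫⁻ _ in Ioo R 1, (erpow R (-s) * (erpow R⁻¹ n * avgNorm f x 1)) ^ q * erpow R (-1) := by
        refine setLIntegral_mono' measurableSet_Ioo fun t ht => ?_
        have ht0 : 0 < t := hR.trans ht.1
        gcongr
        · exact erpow_le_erpow_of_nonpos hR ht.1.le (by linarith)
        · refine avgNorm_le_mul_avgNorm ht0 one_pos (by positivity) ?_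
            (closedBall_subset_closedBall ht.2.le) f
          rw [inv_mul_eq_div, one_le_div hR]
          exact ht.1.le
        · exact erpow_le_erpow_of_nonpos hR ht.1.le (by norm_num)
    _ = c * avgNorm f x 1 ^ q := by
        rw [setLIntegral_const, ← mul_assoc, ENNReal.mul_rpow_of_nonneg _ _ hq.le]
        ring

lemma lintegral_avgNorm_rpow_le {p : ℝ} (hp : 1 < p) {f : Rn n → ℝ} (hf : Measurable f) :
    ∫⁻ x, avgNorm f x 1 ^ p ≤ ∫⁻ x, ‖f x‖ₑ ^ p := by
  have hpp : p.HolderConjugate (p / (p - 1)) := .conjExponent hp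
  let V : ℝ≥0∞ := 2 ^ n
  have hV0 : V ≠ 0 := by simp [V]
  have hV : V ≠ ⊤ := by simp [V]
  have hvol : ∀ x : Rn n, volume (closedBall x 1) = V := fun x => by
    rw [volume_closedBall_eq_erpow x one_pos, erpow, Real.one_rpow, ENNReal.ofReal_one, mul_one]
  have hjensen : ∀ x : Rn n, avgNorm f x 1 ^ p ≤ V⁻¹ * ∫⁻ y in closedBall x 1, ‖f y‖ₑ ^ p := by
    intro x
    have hholder := rpow_lintegral_mul_le (μ := volume.restrict (closedBall x 1)) hpp
      (u := fun y => ‖f y‖ₑ) (v := 1) (by fun_prop) aemeasurable_const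
    simp only [Pi.one_apply, mul_one, ENNReal.one_rpow, lintegral_one,
      Measure.restrict_apply_univ, hvol, hpp.div_conj_eq_sub_one] at hholder
    calc avgNorm f x 1 ^ p = V⁻¹ ^ p * (∫⁻ y in closedBall x 1, ‖f y‖ₑ) ^ p := by
          rw [avgNorm, setLAverage_eq, hvol, ENNReal.div_eq_inv_mul,
            ENNReal.mul_rpow_of_nonneg _ _ hpp.nonneg]
      _ ≤ V⁻¹ ^ p * ((∫⁻ y in closedBall x 1, ‖f y‖ₑ ^ p) * V ^ (p - 1)) := by gcongr
      _ = V ^ (-p + (p - 1)) * ∫⁻ y in closedBall x 1, ‖f y‖ₑ ^ p := by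
          rw [ENNReal.rpow_add _ _ hV0 hV, ENNReal.inv_rpow, ENNReal.rpow_neg]
          ring
      _ = _ := by rw [show -p + (p - 1) = -1 by ring, ENNReal.rpow_neg_one]
  calc ∫⁻ x, avgNorm f x 1 ^ p ≤ ∫⁻ x, V⁻¹ * ∫⁻ y in closedBall x 1, ‖f y‖ₑ ^ p ∂volume :=
        lintegral_mono hjensen
    _ = V⁻¹ * ∫⁻ y, ‖f y‖ₑ ^ p * V := by
        rw [lintegral_const_mul' _ _ (by simpa using hV0),
          lintegral_setLIntegral_closedBall _ _ (by fun_prop)]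
        simp only [hvol]
    _ = _ := by
        rw [lintegral_mul_const' _ _ hV, mul_left_comm, ENNReal.inv_mul_cancel hV0 hV, mul_one]

end ScaleRegimes

section Indicator

variable {n N : ℕ} {f : Rn n → ℝ} {x : Rn n}

lemma subset_or_disjoint_of_disjoint_frontier {X : Type*} [TopologicalSpace X]
    {s t : Set X} (hs : IsPreconnected s) (hst : Disjoint s (frontier t)) :
    s ⊆ t ∨ Disjoint s t := by
  have hcover : s ⊆ interior t ∪ (closure t)ᶜ := fun y hy => by
    by_contra! hyt
    rw [mem_union, not_or, notMem_compl_iff] at hyt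
    exact hst.notMem_of_mem_left hy ⟨hyt.2, hyt.1⟩
  have hdisj : Disjoint (interior t) (closure t)ᶜ :=
    disjoint_compl_right_iff_subset.2 (interior_subset.trans subset_closure)
  refine (hs.subset_or_subset isOpen_interior isClosed_closure.isOpen_compl hdisj hcover).imp
    (·.trans interior_subset) fun h => ?_
  exact (disjoint_compl_left_iff_subset.2 subset_closure).mono_left h

lemma avgNorm_indicator_le (Ω : Set (Rn n)) (f : Rn n → ℝ) (x : Rn n) (t : ℝ) :
    avgNorm (Ω.indicator f) x t ≤ avgNorm f x t :=
  lintegral_mono fun _ => enorm_indicator_le_enorm_self f _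

lemma bestApprox_indicator_le {Ω : Set (Rn n)} {t : ℝ} (hx : t < infDist x (frontier Ω)) (N : ℕ)
    (f : Rn n → ℝ) : bestApprox N (Ω.indicator f) x t ≤ bestApprox N f x t := by
  rcases subset_or_disjoint_of_disjoint_frontier (convex_closedBall x t).isPreconnected
    (disjoint_closedBall_of_lt_infDist hx) with hsub | hout
  · refine iInf₂_mono fun P _ => le_of_eq ?_
    simp only [avgNorm, setLAverage_eq]
    congr 1
    exact setLIntegral_congr_fun measurableSet_closedBall fun y hy => by
      rw [indicator_of_mem (hsub hy)]
  · refine (bestApprox_le_avgNorm N _ x t).trans ?_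
    rw [avgNorm, setLAverage_eq, setLIntegral_congr_fun (g := 0) measurableSet_closedBall
      fun y hy => by rw [indicator_of_notMem (hout.notMem_of_mem_left hy), enorm_zero]; rfl]
    simp

lemma scaleIntegral_indicator_le {Ω : Set (Rn n)} {s q : ℝ} (hq : 0 ≤ q)
    (hx : 0 < infDist x (frontier Ω)) (R : ℝ) (N : ℕ) (f : Rn n → ℝ) :
    scaleIntegral N s q (Ω.indicator f) x ≤ scaleIntegral N s q f x +
      (∫⁻ t in Icc (infDist x (frontier Ω)) R,
        (erpow t (-s) * avgNorm f x t) ^ q * erpow t (-1)) +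
      ∫⁻ t in Ioo R 1, (erpow t (-s) * avgNorm f x t) ^ q * erpow t (-1) := by
  set δ := infDist x (frontier Ω)
  let φ : ℝ → ℝ≥0∞ := fun t => (erpow t (-s) * bestApprox N (Ω.indicator f) x t) ^ q * erpow t (-1)
  have havg : ∀ t, φ t ≤ (erpow t (-s) * avgNorm f x t) ^ q * erpow t (-1) := fun t => by
    simp only [φ]
    gcongr
    exact (bestApprox_le_avgNorm N _ x t).trans (avgNorm_indicator_le Ω f x t)
  have hcover : Ioo 0 1 ⊆ Ioo 0 (min δ 1) ∪ Icc δ R ∪ Ioo R 1 := fun t ht => by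
    simp only [mem_union, mem_Ioo, mem_Icc, lt_min_iff]
    grind
  calc scaleIntegral N s q (Ω.indicator f) x
      ≤ (∫⁻ t in Ioo 0 (min δ 1), φ t) + (∫⁻ t in Icc δ R, φ t) + ∫⁻ t in Ioo R 1, φ t := by
        refine (lintegral_mono_set hcover).trans ?_
        grw [lintegral_union_le, lintegral_union_le]
    _ ≤ _ := by
        gcongr ?_ + ?_ + ?_
        · refine (setLIntegral_mono' measurableSet_Ioo fun t ht => ?_).trans
            (lintegral_mono_set (Ioo_subset_Ioo_right (min_le_right _ _)))
          simp only [φ]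
          gcongr
          exact bestApprox_indicator_le (ht.2.trans_le (min_le_left _ _)) N f
        · exact lintegral_mono havg
        · exact lintegral_mono havg

end Indicator

section IndicatorNorm

variable {n : ℕ}

lemma exists_weight_exponents {m d p s : ℝ} (hp : 1 < p) (hs : (m - d) / p < s) :
    ∃ σ b : ℝ, 0 < b ∧ 0 < s - σ - m + d ∧ -((σ - b / p) * (p / (p - 1))) < m - d := by
  obtain ⟨s', hs', hs's⟩ := exists_between hs
  have hp0 : 0 < p := by linarith
  have hp1 : 0 < p - 1 := by linarith
  have hs'p : m - d < s' * p := (div_lt_iff₀ hp0).1 hs'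
  refine ⟨s' - m + d, (s' * p - (m - d)) / 2, by linarith, by linarith, ?_⟩
  rw [show -((s' - m + d - (s' * p - (m - d)) / 2 / p) * (p / (p - 1))) =
    ((s' * p - (m - d)) / 2 - (s' - m + d) * p) / (p - 1) by field_simp; ring,
    div_lt_iff₀ hp1]
  linarith

lemma exists_lintegral_sharpMax_rpow_le (n N : ℕ) (s : ℝ) {p q : ℝ} (hp : 0 ≤ p) (hq : 0 < q) :
    ∃ K : ℝ≥0, ∀ f : Rn n → ℝ,
      ∫⁻ x, sharpMax N s f x ^ p ≤ K * ∫⁻ x, scaleIntegral N s q f x ^ (p / q) := by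
  obtain ⟨K, hK⟩ := exists_sharpMax_rpow_le n N s hq
  have hr : 0 ≤ p / q := by positivity
  refine ⟨K ^ (p / q), fun f => ?_⟩
  rw [← lintegral_const_mul' _ _ ENNReal.coe_ne_top, ENNReal.coe_rpow_of_nonneg _ hr]
  refine lintegral_mono fun x => ?_
  calc sharpMax N s f x ^ p = (sharpMax N s f x ^ q) ^ (p / q) := by
        rw [← ENNReal.rpow_mul, mul_div_cancel₀ _ hq.ne']
    _ ≤ (K * scaleIntegral N s q f x) ^ (p / q) := by
        gcongr
        exact hK f x
    _ = _ := ENNReal.mul_rpow_of_nonneg _ _ hr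

lemma exists_scaleIntegral_indicator_rpow_le (n N : ℕ) {s p q R : ℝ} (hs : 0 ≤ s) (hp : 0 ≤ p)
    (hq : 0 < q) (hR : 0 < R) :
    ∃ K : ℝ≥0, ∀ (Ω : Set (Rn n)) (f : Rn n → ℝ) (x : Rn n), 0 < infDist x (frontier Ω) →
      scaleIntegral N s q (Ω.indicator f) x ^ (p / q) ≤
        3 ^ (p / q) * (scaleIntegral N s q f x ^ (p / q) +
          (∫⁻ t in Icc (infDist x (frontier Ω)) R,
            (erpow t (-s) * avgNorm f x t) ^ q * erpow t (-1)) ^ (p / q) +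
          K * avgNorm f x 1 ^ p) := by
  obtain ⟨K, hK⟩ := exists_setLIntegral_Ioo_avgNorm_rpow_le n hs hq hR
  have hr : 0 ≤ p / q := by positivity
  refine ⟨K ^ (p / q), fun Ω f x hx => ?_⟩
  refine ((ENNReal.rpow_le_rpow (scaleIntegral_indicator_le hq.le hx R N f) hr).trans
    (add_add_rpow_le _ _ _ hr)).trans ?_
  gcongr
  refine (ENNReal.rpow_le_rpow (hK f x) hr).trans_eq ?_
  rw [ENNReal.mul_rpow_of_nonneg _ _ hr, ← ENNReal.rpow_mul, mul_div_cancel₀ _ hq.ne',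
    ENNReal.coe_rpow_of_nonneg _ hr]

namespace IsDSet

variable {S : Set (Rn n)} {d C₀ : ℝ}

theorem exists_rpow_setLIntegral_avgNorm_le (hS : IsDSet S d C₀) (hne : S.Nonempty) (hd0 : 0 < d)
    (hd1 : (n : ℝ) - 1 < d) (hd2 : d < n) (N : ℕ) {s σ b p p' q ε : ℝ} (hs : 0 ≤ s)
    (hσ : 0 < s - σ - n + d) (hpp : p.HolderConjugate p') (hσb : -((σ - b / p) * p') < n - d)
    (hq : 0 < q) (hε : 0 < ε) (hεb : 0 ≤ n - ε + b) :
    ∃ K : ℝ≥0, ∀ f : Rn n → ℝ, LocallyIntegrable f → TraceZero S d f → ∀ x, 0 < infDist x S →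
      (∫⁻ t in Icc (infDist x S) (1 / 384),
        (erpow t (-s) * avgNorm f x t) ^ q * erpow t (-1)) ^ (p / q) ≤
      K * (erpow (infDist x S) (-ε) * boundaryPotential S (n - ε + b)
        (fun y => sharpMax N s f y ^ p * erpow (infDist y S) b) x) := by
  obtain ⟨A, hA⟩ := hS.exists_rpow_avgNorm_le_setLIntegral hne hd0 hd1 hd2 N hs hσ hpp hσb
  obtain ⟨B, hB⟩ := exists_setLIntegral_Icc_rpow_le hpp.pos hq hε
  refine ⟨B * A, fun f hf htr x hx => ?_⟩
  let Z : Rn n → ℝ≥0∞ := fun y => sharpMax N s f y ^ p * erpow (infDist y S) b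
  have hscale : ∀ t ∈ Icc (infDist x S) (1 / 384), (erpow t (-s) * avgNorm f x t) ^ p ≤
      A * boundaryPotential S (n - ε + b) Z x * erpow t (-ε) := fun t ht => by
    have ht0 : 0 < t := hx.trans_le ht.1
    calc (erpow t (-s) * avgNorm f x t) ^ p
        ≤ A * (erpow t (-n - b) * ∫⁻ y in closedBall x (3 * t), Z y) :=
          hA f hf htr x t ht0 (by linarith [ht.2]) ht.1
      _ = A * (erpow t (-(n - ε + b)) * ∫⁻ y in closedBall x (3 * t), Z y) * erpow t (-ε) := by
          rw [show (-n - b : ℝ) = -(n - ε + b) + -ε by ring, erpow_add ht0]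
          ring
      _ ≤ _ := by
          gcongr
          exact erpow_mul_setLIntegral_le_boundaryPotential hεb Z hx ht.1 ht.2
  refine (hB _ _ _ _ hx hscale).trans_eq ?_
  push_cast
  ring

/-- The intermediate scales are dominated by a measurable majorant because they are not evidently
measurable in `x`, so their integral could not be split off a sum. -/
theorem exists_measurable_majorant (hS : IsDSet S d C₀) (hne : S.Nonempty) (hd0 : 0 < d)
    (hd1 : (n : ℝ) - 1 < d) (hd2 : d < n) (N : ℕ) {s p q : ℝ} (hp : 1 < p) (hq : 0 < q)
    (hs : (n - d) / p < s) :
    ∃ K : ℝ≥0, ∀ f : Rn n → ℝ, LocallyIntegrable f → TraceZero S d f →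
      ∃ U : Rn n → ℝ≥0∞, Measurable U ∧ (∀ x, 0 < infDist x S →
        (∫⁻ t in Icc (infDist x S) (1 / 384),
          (erpow t (-s) * avgNorm f x t) ^ q * erpow t (-1)) ^ (p / q) ≤ U x) ∧
        ∫⁻ x, U x ≤ K * ∫⁻ x, sharpMax N s f x ^ p := by
  have hp0 : 0 < p := by linarith
  have hs0 : 0 ≤ s := (div_nonneg (sub_nonneg.2 hd2.le) hp0.le).trans hs.le
  obtain ⟨σ, b, hb, hσ, hσb⟩ := exists_weight_exponents hp hs
  let ε : ℝ := (n - d) / 2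
  have hε : 0 < ε := half_pos (sub_pos.2 hd2)
  have hεd : ε < n - d := half_lt_self (sub_pos.2 hd2)
  obtain ⟨A, hA⟩ := hS.exists_rpow_setLIntegral_avgNorm_le hne hd0 hd1 hd2 N hs0 hσ
    (.conjExponent hp) hσb hq hε (by linarith)
  obtain ⟨B, hB⟩ := hS.exists_setLIntegral_boundaryPotential_le hne hd2 hb hεd
  refine ⟨A * B, fun f hf htr => ?_⟩
  let D := {x : Rn n | infDist x S ≤ 1 / 384}
  have hD : MeasurableSet D := measurableSet_le measurable_infDist measurable_const
  have hsharp : Measurable fun x => sharpMax N s f x ^ p := (measurable_sharpMax hf N s).pow_const p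
  let V : Rn n → ℝ≥0∞ := fun x => erpow (infDist x S) (-ε) * boundaryPotential S (n - ε + b)
    (fun y => sharpMax N s f y ^ p * erpow (infDist y S) b) x
  have hV : Measurable V :=
    ((measurable_erpow _).comp measurable_infDist).mul
      (measurable_boundaryPotential S _ (by fun_prop))
  refine ⟨D.indicator fun x => A * V x, (hV.const_mul _).indicator hD, fun x hx => ?_, ?_⟩
  · by_cases hxD : x ∈ D
    · rw [indicator_of_mem hxD]
      exact hA f hf htr x hx
    · rw [Icc_eq_empty hxD, Measure.restrict_empty, lintegral_zero_measure,
        ENNReal.zero_rpow_of_pos (by positivity)]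
      exact zero_le
  · rw [lintegral_indicator hD, lintegral_const_mul _ hV, ENNReal.coe_mul, mul_assoc]
    exact mul_le_mul_right (hB _ hsharp) _

theorem exists_lintegral_scaleIntegral_indicator_le {Ω : Set (Rn n)}
    (hΩ : IsDSet (frontier Ω) d C₀) (hne : (frontier Ω).Nonempty) (hd0 : 0 < d)
    (hd1 : (n : ℝ) - 1 < d) (hd2 : d < n) (N : ℕ) {s p q : ℝ} (hp : 1 < p) (hq : 0 < q)
    (hs : (n - d) / p < s) :
    ∃ K : ℝ≥0, ∀ f : Rn n → ℝ, LocallyIntegrable f → Measurable f → TraceZero (frontier Ω) d f →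
      ∫⁻ x, scaleIntegral N s q (Ω.indicator f) x ^ (p / q) ≤
        K * ((∫⁻ x, ‖f x‖ₑ ^ p) + ∫⁻ x, scaleIntegral N s q f x ^ (p / q)) := by
  have hp0 : 0 < p := by linarith
  have hr : 0 ≤ p / q := by positivity
  have hs0 : 0 ≤ s := (div_nonneg (sub_nonneg.2 hd2.le) hp0.le).trans hs.le
  obtain ⟨A, hA⟩ := hΩ.exists_measurable_majorant hne hd0 hd1 hd2 N hp hq hs
  obtain ⟨B, hB⟩ := exists_scaleIntegral_indicator_rpow_le n N (R := 1 / 384) hs0 hp0.le hq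
    (by norm_num)
  obtain ⟨C, hC⟩ := exists_lintegral_sharpMax_rpow_le n N s hp0.le hq
  refine ⟨3 ^ (p / q) * (1 + A * C + B), fun f hf hfm htr => ?_⟩
  obtain ⟨U, hU, hnear, hUint⟩ := hA f hf htr
  let I : Rn n → ℝ≥0∞ := fun x => scaleIntegral N s q f x ^ (p / q)
  let F : Rn n → ℝ≥0∞ := fun x => B * avgNorm f x 1 ^ p
  have hF : Measurable F :=
    ((upperSemicontinuous_avgNorm hf one_pos).measurable.pow_const p).const_mul _
  have hpointwise : ∀ᵐ x, scaleIntegral N s q (Ω.indicator f) x ^ (p / q) ≤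
      3 ^ (p / q) * (I x + U x + F x) := by
    filter_upwards [hΩ.ae_infDist_pos hne hd2] with x hx
    refine (hB Ω f x hx).trans ?_
    gcongr
    exact hnear x hx
  calc ∫⁻ x, scaleIntegral N s q (Ω.indicator f) x ^ (p / q)
      ≤ 3 ^ (p / q) * ((∫⁻ x, I x) + (∫⁻ x, U x) + ∫⁻ x, F x) := by
        refine (lintegral_mono_ae hpointwise).trans_eq ?_
        rw [lintegral_const_mul' _ _ (by finiteness), lintegral_add_right _ hF,
          lintegral_add_right _ hU]
    _ ≤ 3 ^ (p / q) * ((∫⁻ x, I x) + A * (C * ∫⁻ x, I x) + B * ∫⁻ x, ‖f x‖ₑ ^ p) := by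
        gcongr
        · exact hUint.trans (mul_le_mul_right (hC f) _)
        · rw [lintegral_const_mul' _ _ (by finiteness)]
          exact mul_le_mul_right (lintegral_avgNorm_rpow_le hp hfm) _
    _ = 3 ^ (p / q) * (B * (∫⁻ x, ‖f x‖ₑ ^ p) + (1 + A * C) * ∫⁻ x, I x) := by ring
    _ ≤ 3 ^ (p / q) * ((1 + A * C + B) * (∫⁻ x, ‖f x‖ₑ ^ p) +
          (1 + A * C + B) * ∫⁻ x, I x) := by
        exact mul_le_mul_right (add_le_add (mul_le_mul_left le_add_self _)
          (mul_le_mul_left le_self_add _)) _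
    _ = _ := by
        push_cast [ENNReal.coe_rpow_of_nonneg _ hr]
        ring

end IsDSet

lemma tlNorm_eq (s p q : ℝ) (f : Rn n → ℝ) :
    tlNorm s p q f = (∫⁻ x, ‖f x‖ₑ ^ p) ^ (1 / p) +
      (∫⁻ x, scaleIntegral ⌊s⌋₊ s q f x ^ (p / q)) ^ (1 / p) := by
  simp only [tlNorm, scaleIntegral, localApprox_succ_one, Real.enorm_eq_ofReal_abs, erpow,
    Real.rpow_neg_one, ← ENNReal.rpow_mul, one_div_mul_eq_div]

lemma tlNorm_zero {s p q : ℝ} (hp : 0 < p) (hq : 0 < q) :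
    tlNorm s p q (fun _ : Rn n => 0) = 0 := by
  have happrox : ∀ (x : Rn n) t, bestApprox ⌊s⌋₊ (fun _ => 0) x t = 0 := fun x t =>
    le_zero_iff.1 ((bestApprox_le_avgNorm _ _ x t).trans_eq (by simp [avgNorm]))
  simp [tlNorm_eq, scaleIntegral, happrox, hp, hq, div_pos hp hq]

lemma locallyIntegrable_of_tlNorm_lt_top {s p q : ℝ} (hp : 1 ≤ p) {f : Rn n → ℝ}
    (hf : Measurable f) (hfin : tlNorm s p q f < ⊤) : LocallyIntegrable f := by
  have hp0 : 0 < p := by linarith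
  rw [tlNorm_eq, ENNReal.add_lt_top] at hfin
  have hmem : MemLp f (ENNReal.ofReal p) := by
    refine ⟨hf.aestronglyMeasurable, ?_⟩
    rw [eLpNorm_eq_lintegral_rpow_enorm_toReal (by simpa using hp0) ENNReal.ofReal_ne_top,
      ENNReal.toReal_ofReal hp0.le]
    exact hfin.1
  exact hmem.locallyIntegrable (by simpa using hp)

theorem exists_tlNorm_indicator_le {Ω : Set (Rn n)} {d C₀ : ℝ} (hΩ : IsDSet (frontier Ω) d C₀)
    (hne : (frontier Ω).Nonempty) (hd0 : 0 < d) (hd1 : (n : ℝ) - 1 < d) (hd2 : d < n)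
    {s p q : ℝ} (hp : 1 < p) (hq : 0 < q) (hs : (n - d) / p < s) :
    ∃ c : ℝ≥0, ∀ f : Rn n → ℝ, Measurable f → tlNorm s p q f < ⊤ → TraceZero (frontier Ω) d f →
      tlNorm s p q (Ω.indicator f) ≤ c * tlNorm s p q f := by
  obtain ⟨K, hK⟩ :=
    hΩ.exists_lintegral_scaleIntegral_indicator_le hne hd0 hd1 hd2 ⌊s⌋₊ hp hq hs
  have hp0 : 0 ≤ 1 / p := by positivity
  have hp1 : 1 / p ≤ 1 := (div_le_one (by linarith)).2 hp.le
  refine ⟨1 + K ^ (1 / p), fun f hfm hfin htr => ?_⟩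
  have hf := locallyIntegrable_of_tlNorm_lt_top hp.le hfm hfin
  let X := ∫⁻ x, ‖f x‖ₑ ^ p
  let Y := ∫⁻ x, scaleIntegral ⌊s⌋₊ s q f x ^ (p / q)
  calc tlNorm s p q (Ω.indicator f) ≤ X ^ (1 / p) + (K * (X + Y)) ^ (1 / p) := by
        rw [tlNorm_eq]
        gcongr
        · exact lintegral_mono fun x => by
            gcongr
            exact enorm_indicator_le_enorm_self f x
        · exact hK f hf hfm htr
    _ ≤ (X ^ (1 / p) + Y ^ (1 / p)) + K ^ (1 / p) * (X ^ (1 / p) + Y ^ (1 / p)) := by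
        rw [ENNReal.mul_rpow_of_nonneg _ _ hp0]
        gcongr
        · exact le_self_add
        · exact ENNReal.rpow_add_le_add_rpow X Y hp0 hp1
    _ = _ := by
        rw [tlNorm_eq, ← one_add_mul, ENNReal.coe_add, ENNReal.coe_one,
          ENNReal.coe_rpow_of_nonneg _ hp0]

end IndicatorNorm

theorem multiplier_zero_trace_general {n : ℕ} (Ω : Set (Rn n)) {d C₀ : ℝ}
    (hbd : IsDSet (frontier Ω) d C₀) (hd1 : (n : ℝ) - 1 < d) (hd2 : d < n) {p q s : ℝ}
    (hp : 1 < p) (hq : 0 < q) (hs : ((n : ℝ) - d) / p < s) :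
    ∃ c > 0, ∀ f : Rn n → ℝ, Measurable f → tlNorm s p q f < ⊤ →
      TraceZero (frontier Ω) d f →
      tlNorm s p q (Ω.indicator f) ≤ ENNReal.ofReal c * tlNorm s p q f := by
  suffices h : ∃ c : ℝ≥0, ∀ f : Rn n → ℝ, Measurable f → tlNorm s p q f < ⊤ →
      TraceZero (frontier Ω) d f → tlNorm s p q (Ω.indicator f) ≤ c * tlNorm s p q f by
    obtain ⟨c, hc⟩ := h
    refine ⟨(c + 1 : ℝ≥0), by positivity, fun f hfm hfin htr => (hc f hfm hfin htr).trans ?_⟩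
    rw [ENNReal.ofReal_coe_nnreal]
    gcongr
    exact le_self_add
  rcases (frontier Ω).eq_empty_or_nonempty with hempty | hne
  · refine ⟨1, fun f _ _ _ => ?_⟩
    rw [ENNReal.coe_one, one_mul]
    rcases frontier_eq_empty_iff.1 hempty with rfl | rfl
    · rw [indicator_empty]
      exact (tlNorm_zero (by linarith) hq).trans_le zero_le
    · rw [indicator_univ]
  · have hn : n ≠ 0 := fun hn => by
      subst hn
      exact hne.ne_empty (isClopen_discrete Ω).frontier_eq
    have hn1 : (1 : ℝ) ≤ n := by exact_mod_cast Nat.one_le_iff_ne_zero.2 hn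
    exact exists_tlNorm_indicator_le hbd hne (by linarith) hd1 hd2 hp hq hs

/-- **`χ_Ω` is a pointwise multiplier on functions with vanishing boundary trace**
(Corollary 4.2). Let `Ω ⊆ ℝⁿ` (`n ≥ 2`) be a domain whose boundary is a `d`-set with
`n−1 < d < n`, `1 < p < ∞`, `1 ≤ q < ∞`, `s > (n−d)/p`. Then there is `c > 0` such that
every `f ∈ F^s_{pq}(ℝⁿ)` with `Tr_{∂Ω} f = 0` ℋᵈ-a.e. satisfies
`‖f χ_Ω‖_{F^s_{pq}(ℝⁿ)} ≤ c ‖f‖_{F^s_{pq}(ℝⁿ)}`. -/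
theorem multiplier_zero_trace {n : ℕ} (hn : 2 ≤ n) (Ω : Set (Rn n))
    (hΩo : IsOpen Ω) (hΩc : IsConnected Ω) (d C₀ : ℝ)
    (hbd : IsDSet (frontier Ω) d C₀) (hd1 : (n : ℝ) - 1 < d) (hd2 : d < n)
    (p q s : ℝ) (hp : 1 < p) (hq : 1 ≤ q) (hs : ((n : ℝ) - d) / p < s) :
    ∃ c > 0, ∀ f : Rn n → ℝ, Measurable f → tlNorm s p q f < ⊤ →
      TraceZero (frontier Ω) d f →
      tlNorm s p q (Ω.indicator f) ≤ ENNReal.ofReal c * tlNorm s p q f :=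
  multiplier_zero_trace_general Ω hbd hd1 hd2 hp (by linarith) hs
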